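/- The sequence {p(n)^{1/n}}_{n≥27} is log-convex; that is, for every integer n ≥ 27, (p(n)^{1/n})² ≤ p(n-1)^{1/(n-1)} · p(n+1)^{1/(n+1)}. -/

import Mathlib

open Real

/-- The partition function, as a real number. -/
noncomputable def p (n : ℕ) : ℝ := (Fintype.card (Nat.Partition n) : ℝ)

namespace PartitionRoot

section GeneratingFunction

open PowerSeries Nat.Partition Filter Topology
open scoped PowerSeries.WithPiTopology

/-- The number of partitions of `n` into parts of size at most `K`. -/
def boundedCard (K n : ℕ) : ℕ := (restricted n (· ≤ K)).card

theorem boundedCard_le (K n : ℕ) : boundedCard K n ≤ Fintype.card (Nat.Partition n) :=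
  Finset.card_le_univ _

theorem boundedCard_eq {K n : ℕ} (h : n ≤ K) :
    boundedCard K n = Fintype.card (Nat.Partition n) := by
  rw [boundedCard, ← Finset.card_univ]
  congr 1
  ext q
  simp only [restricted, Finset.mem_filter, Finset.mem_univ, true_and, iff_true]
  exact fun i hi => (le_of_mem_parts hi).trans h

theorem mk_boundedCard (K : ℕ) :
    (PowerSeries.mk fun n => (boundedCard K n : ℂ)) =
      ∏ i ∈ Finset.range K, ∑' j : ℕ, (X : ℂ⟦X⟧) ^ ((i + 1) * j) := by
  have h := hasProd_powerSeriesMk_card_restricted ℂ (· ≤ K)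
  have h2 := hasProd_prod_of_ne_finset_one (L := SummationFilter.unconditional ℕ)
    (f := fun i => if i + 1 ≤ K then ∑' j : ℕ, (X : ℂ⟦X⟧) ^ ((i + 1) * j) else 1)
    (s := Finset.range K) (by
      intro b hb
      rw [if_neg]
      simpa using hb)
  refine (h.unique h2).trans (Finset.prod_congr rfl fun i hi => ?_)
  rw [if_pos]
  exact Finset.mem_range.mp hi

/-- The series with coefficient one at the multiples of `d`. -/
theorem tsum_X_pow_mul {d : ℕ} (hd : 0 < d) :
    ∑' j : ℕ, (X : ℂ⟦X⟧) ^ (d * j) = PowerSeries.mk fun l => if d ∣ l then 1 else 0 := by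
  have h : HasSum (fun l : ℕ => if d ∣ l then (X : ℂ⟦X⟧) ^ l else 0)
      (PowerSeries.mk fun l => if d ∣ l then 1 else 0) := by
    convert! (PowerSeries.mk fun l => if d ∣ l then (1 : ℂ) else 0).hasSum_of_monomials_self using 1
    ext1 l
    split_ifs with hl <;> simp [hl, PowerSeries.X_pow_eq]
  have hinj : Function.Injective fun j : ℕ => d * j := fun a b hab => by
    simpa [hd.ne'] using hab
  have h3 := (hinj.hasSum_iff (f := fun l : ℕ => if d ∣ l then (X : ℂ⟦X⟧) ^ l else 0) (by
    intro l hl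
    rw [if_neg]
    rintro ⟨c, rfl⟩
    exact hl ⟨c, rfl⟩)).mpr h
  simpa [Function.comp_def] using h3.tsum_eq

/-- `A` converges absolutely at `z` with value `a`. -/
def HasValue (A : ℂ⟦X⟧) (z a : ℂ) : Prop :=
  (Summable fun n => ‖A.coeff n * z ^ n‖) ∧ HasSum (fun n => A.coeff n * z ^ n) a

theorem HasValue.mul {A B : ℂ⟦X⟧} {z a b : ℂ} (hA : HasValue A z a) (hB : HasValue B z b) :
    HasValue (A * B) z (a * b) := by
  have key : (fun n => (A * B).coeff n * z ^ n) = fun n =>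
      ∑ kl ∈ Finset.HasAntidiagonal.antidiagonal n,
        (A.coeff kl.1 * z ^ kl.1) * (B.coeff kl.2 * z ^ kl.2) := by
    ext n
    rw [PowerSeries.coeff_mul, Finset.sum_mul]
    refine Finset.sum_congr rfl fun kl hkl => ?_
    rw [← Finset.HasAntidiagonal.mem_antidiagonal.mp hkl, pow_add]
    ring
  have hs := summable_norm_sum_mul_antidiagonal_of_summable_norm hA.1 hB.1
  have ht := tsum_mul_tsum_eq_tsum_sum_antidiagonal_of_summable_norm hA.1 hB.1
  refine ⟨?_, ?_⟩
  · exact hs.congr fun n => congrArg norm (congrFun key n).symm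
  · rw [hA.2.tsum_eq, hB.2.tsum_eq] at ht
    rw [key, ht]
    exact hs.of_norm.hasSum

theorem hasValue_geometric {d : ℕ} (hd : 0 < d) {z : ℂ} (hz : ‖z‖ < 1) :
    HasValue (∑' j : ℕ, (X : ℂ⟦X⟧) ^ (d * j)) z (1 - z ^ d)⁻¹ := by
  rw [tsum_X_pow_mul hd]
  have hinj : Function.Injective fun j : ℕ => d * j := fun a b hab => by
    simpa [hd.ne'] using hab
  have hzd : ‖z ^ d‖ < 1 := by
    rw [norm_pow]; exact pow_lt_one₀ (norm_nonneg _) hz hd.ne'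
  refine ⟨?_, ?_⟩
  · refine Summable.of_nonneg_of_le (fun _ => norm_nonneg _) (fun n => ?_)
      (summable_geometric_of_lt_one (norm_nonneg z) hz)
    rw [PowerSeries.coeff_mk]
    split_ifs <;> simp
  · rw [← hinj.hasSum_iff]
    · simpa [Function.comp_def, pow_mul] using hasSum_geometric_of_norm_lt_one hzd
    · intro l hl
      rw [PowerSeries.coeff_mk, if_neg, zero_mul]
      rintro ⟨c, rfl⟩
      exact hl ⟨c, rfl⟩

theorem hasValue_boundedCard (K : ℕ) {z : ℂ} (hz : ‖z‖ < 1) :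
    HasValue (PowerSeries.mk fun n => (boundedCard K n : ℂ)) z
      (∏ i ∈ Finset.range K, (1 - z ^ (i + 1))⁻¹) := by
  rw [mk_boundedCard]
  induction K with
  | zero =>
    have h : HasSum (fun n => (1 : ℂ⟦X⟧).coeff n * z ^ n) 1 := by
      convert hasSum_single (f := fun n => (1 : ℂ⟦X⟧).coeff n * z ^ n) 0 ?_ using 1
      · simp
      · intro n hn
        simp [PowerSeries.coeff_one, hn]
    refine ⟨?_, by simpa using h⟩
    simpa using h.summable.norm
  | succ K ih =>
    rw [Finset.prod_range_succ, Finset.prod_range_succ]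
    exact ih.mul (hasValue_geometric K.succ_pos hz)

theorem hasSum_neg_log {z : ℂ} (hz : ‖z‖ < 1) :
    HasSum (fun i : ℕ => z ^ (i + 1) / ((i : ℂ) + 1)) (-Complex.log (1 - z)) := by
  have h := (hasSum_nat_add_iff' 1).mpr (Complex.hasSum_taylorSeries_neg_log hz)
  simpa using h

theorem summable_geometric_prod (a b : ℕ) {r : ℝ} (h0 : 0 ≤ r) (h1 : r < 1) :
    Summable fun ij : ℕ × ℕ =>
      ((ij.1 : ℝ) + 1) ^ a * ((ij.2 : ℝ) + 1) ^ b * r ^ ((ij.1 + 1) * (ij.2 + 1)) := by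
  have key (c : ℕ) : Summable fun i : ℕ => ((i : ℝ) + 1) ^ c * r ^ i := by
    rcases h0.eq_or_lt with rfl | h0
    · exact summable_of_ne_finset_zero (s := {0}) fun i hi => by simp_all
    have h := (summable_pow_mul_geometric_of_norm_lt_one c (r := r) (by
      rwa [Real.norm_of_nonneg h0.le]))
    have h2 := ((summable_nat_add_iff 1).mpr h).mul_left r⁻¹
    refine h2.congr fun i => ?_
    push_cast
    rw [pow_succ r]
    field_simp
  refine Summable.of_nonneg_of_le (fun _ => by positivity) (fun ij => ?_)
    ((key a).mul_of_nonneg (key b) (fun _ => by positivity) (fun _ => by positivity))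
  have : r ^ ((ij.1 + 1) * (ij.2 + 1)) ≤ r ^ (ij.1 + ij.2) :=
    pow_le_pow_of_le_one h0 h1.le (by nlinarith [Nat.zero_le (ij.1 * ij.2)])
  calc _ ≤ ((ij.1 : ℝ) + 1) ^ a * ((ij.2 : ℝ) + 1) ^ b * r ^ (ij.1 + ij.2) := by gcongr
    _ = _ := by rw [pow_add]; ring

theorem summable_lambert {z : ℂ} (hz : ‖z‖ < 1) :
    Summable fun ij : ℕ × ℕ => z ^ ((ij.1 + 1) * (ij.2 + 1)) / ((ij.1 : ℂ) + 1) := by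
  refine Summable.of_norm_bounded (summable_geometric_prod 0 0 (norm_nonneg z) hz) fun ij => ?_
  have h : ‖((ij.1 : ℂ) + 1)‖ = (ij.1 : ℝ) + 1 := by
    rw [← Nat.cast_add_one, Complex.norm_natCast]; push_cast; rfl
  rw [norm_div, norm_pow, h, pow_zero, pow_zero, one_mul, one_mul]
  exact div_le_self (by positivity) (by linarith [Nat.cast_nonneg (α := ℝ) ij.1])

/-- The logarithm of the generating function of the partition function. -/
noncomputable def lambert (z : ℂ) : ℂ :=
  ∑' ij : ℕ × ℕ, z ^ ((ij.1 + 1) * (ij.2 + 1)) / ((ij.1 : ℂ) + 1)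

theorem hasSum_neg_log_lambert {z : ℂ} (hz : ‖z‖ < 1) :
    HasSum (fun j : ℕ => -Complex.log (1 - z ^ (j + 1))) (lambert z) := by
  have h := (summable_lambert hz).hasSum
  rw [← (Equiv.prodComm ℕ ℕ).hasSum_iff] at h
  refine h.prod_fiberwise fun j => ?_
  have hzd : ‖z ^ (j + 1)‖ < 1 := by
    rw [norm_pow]; exact pow_lt_one₀ (norm_nonneg _) hz j.succ_ne_zero
  convert hasSum_neg_log hzd using 2 with i
  simp [← pow_mul, mul_comm]

theorem exp_neg_log_one_sub {z : ℂ} (hz : ‖z‖ < 1) :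
    Complex.exp (-Complex.log (1 - z)) = (1 - z)⁻¹ := by
  rw [Complex.exp_neg, Complex.exp_log]
  intro h
  rw [sub_eq_zero] at h
  simp [← h] at hz

theorem tendsto_prod_exp_lambert {z : ℂ} (hz : ‖z‖ < 1) :
    Tendsto (fun K => ∏ i ∈ Finset.range K, (1 - z ^ (i + 1))⁻¹) atTop
      (𝓝 (Complex.exp (lambert z))) := by
  have h := (Complex.continuous_exp.tendsto _).comp (hasSum_neg_log_lambert hz).tendsto_sum_nat
  refine h.congr fun K => ?_
  rw [Function.comp_apply, Complex.exp_sum]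
  refine Finset.prod_congr rfl fun i _ => exp_neg_log_one_sub ?_
  rw [norm_pow]; exact pow_lt_one₀ (norm_nonneg _) hz i.succ_ne_zero

theorem p_nonneg (n : ℕ) : 0 ≤ p n := Nat.cast_nonneg _

theorem summable_p_mul_pow {r : ℝ} (h0 : 0 ≤ r) (h1 : r < 1) :
    Summable fun n => p n * r ^ n := by
  have hz : ‖(r : ℂ)‖ < 1 := by simpa [abs_of_nonneg h0] using h1
  obtain ⟨C, hC⟩ := (tendsto_prod_exp_lambert hz).norm.bddAbove_range
  refine summable_of_sum_range_le (c := C) (fun n => mul_nonneg (p_nonneg n) (by positivity))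
    fun K => ?_
  refine le_trans ?_ (hC ⟨K, rfl⟩)
  have hv := hasValue_boundedCard K hz
  have hs : HasSum (fun n => (boundedCard K n : ℝ) * r ^ n)
      (∏ i ∈ Finset.range K, (1 - r ^ (i + 1))⁻¹) := by
    have := hv.2
    simp only [PowerSeries.coeff_mk] at this
    exact_mod_cast this
  calc ∑ n ∈ Finset.range K, p n * r ^ n
      = ∑ n ∈ Finset.range K, (boundedCard K n : ℝ) * r ^ n := by
        refine Finset.sum_congr rfl fun n hn => ?_
        rw [boundedCard_eq (Finset.mem_range.mp hn).le, p]
    _ ≤ ∏ i ∈ Finset.range K, (1 - r ^ (i + 1))⁻¹ :=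
        sum_le_hasSum _ (fun n _ => by positivity) hs
    _ ≤ |∏ i ∈ Finset.range K, (1 - r ^ (i + 1))⁻¹| := le_abs_self _
    _ = _ := by
        rw [← Real.norm_eq_abs, ← Complex.norm_real]
        push_cast
        rfl

theorem hasSum_p_mul_pow {z : ℂ} (hz : ‖z‖ < 1) :
    HasSum (fun n => (p n : ℂ) * z ^ n) (Complex.exp (lambert z)) := by
  have hs := summable_p_mul_pow (norm_nonneg z) hz
  have hs' : Summable fun n => (p n : ℂ) * z ^ n := by
    refine Summable.of_norm_bounded hs fun n => ?_
    rw [norm_mul, norm_pow, Complex.norm_real, Real.norm_of_nonneg (p_nonneg n)]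
  have hlim : Tendsto (fun K => ∑' n, (boundedCard K n : ℂ) * z ^ n) atTop
      (𝓝 (∑' n, (p n : ℂ) * z ^ n)) := by
    refine tendsto_tsum_of_dominated_convergence hs (fun n => ?_) (Eventually.of_forall ?_)
    · refine tendsto_const_nhds.congr' ?_
      filter_upwards [eventually_ge_atTop n] with K hK
      rw [boundedCard_eq hK, p]
      push_cast
      rfl
    · intro K n
      rw [norm_mul, norm_pow, Complex.norm_natCast]
      gcongr
      exact Nat.cast_le.mpr (boundedCard_le K n)
  have heq : (fun K => ∑' n, (boundedCard K n : ℂ) * z ^ n) =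
      fun K => ∏ i ∈ Finset.range K, (1 - z ^ (i + 1))⁻¹ := by
    ext K
    have := (hasValue_boundedCard K hz).2
    simp only [PowerSeries.coeff_mk] at this
    exact this.tsum_eq
  rw [heq] at hlim
  rw [← tendsto_nhds_unique hlim (tendsto_prod_exp_lambert hz)]
  exact hs'.hasSum

/-- Euler's recurrence in generating function form. -/
theorem mk_card_mul_pentagonalSeries :
    (PowerSeries.mk fun n => (Fintype.card (Nat.Partition n) : ℤ)) * pentagonalSeries ℤ = 1 := by
  have h := hasProd_powerSeriesMk_card_restricted ℤ (fun _ => True)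
  have hcard (n : ℕ) : (restricted n (fun _ => True)).card = Fintype.card (Nat.Partition n) := by
    simp [restricted]
  simp only [hcard, if_true] at h
  refine (h.mul (WithPiTopology.hasProd_one_sub_X_pow ℤ)).unique ?_
  convert! hasProd_one using 1
  ext1 i
  simp_rw [pow_mul]
  exact WithPiTopology.tsum_pow_mul_one_sub_of_constantCoeff_eq_zero (by simp)

end GeneratingFunction

section GeometricSums

variable {q : ℝ}

theorem hasSum_pow_succ (h0 : 0 ≤ q) (h1 : q < 1) :
    HasSum (fun j : ℕ => q ^ (j + 1)) (q / (1 - q)) := by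
  simpa [pow_succ', div_eq_mul_inv] using (hasSum_geometric_of_lt_one h0 h1).mul_left q

theorem hasSum_choose_mul_pow (k : ℕ) (h0 : 0 ≤ q) (h1 : q < 1) :
    HasSum (fun j : ℕ => ((j + k).choose k : ℝ) * q ^ (j + 1)) (q / (1 - q) ^ (k + 1)) := by
  have h := (hasSum_choose_mul_geometric_of_norm_lt_one k (r := q) (by
    rwa [Real.norm_of_nonneg h0])).mul_left q
  simpa [pow_succ', div_eq_mul_inv, mul_left_comm] using h

theorem cast_choose_two (j : ℕ) : ((j + 2).choose 2 : ℝ) = (j + 1) * (j + 2) / 2 := by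
  rw [Nat.cast_choose_two]; push_cast; ring

theorem cast_choose_three (j : ℕ) :
    ((j + 3).choose 3 : ℝ) = (j + 1) * (j + 2) * (j + 3) / 6 := by
  have h := Nat.add_one_mul_choose_eq (j + 2) 2
  have h' : ((j : ℝ) + 2 + 1) * ((j + 2).choose 2 : ℝ) = ((j + 3).choose 3 : ℝ) * (2 + 1) := by
    exact_mod_cast h
  rw [cast_choose_two] at h'
  linarith

theorem hasSum_succ_mul_pow (h0 : 0 ≤ q) (h1 : q < 1) :
    HasSum (fun j : ℕ => ((j : ℝ) + 1) * q ^ (j + 1)) (q / (1 - q) ^ 2) := by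
  simpa using hasSum_choose_mul_pow 1 h0 h1

theorem hasSum_succ_sq_mul_pow (h0 : 0 ≤ q) (h1 : q < 1) :
    HasSum (fun j : ℕ => ((j : ℝ) + 1) ^ 2 * q ^ (j + 1)) (q * (1 + q) / (1 - q) ^ 3) := by
  have h := ((hasSum_choose_mul_pow 2 h0 h1).mul_left 2).sub (hasSum_choose_mul_pow 1 h0 h1)
  have hq : 1 - q ≠ 0 := by linarith
  convert! h using 1
  · ext j
    rw [cast_choose_two, Nat.choose_one_right]
    push_cast
    ring
  · field_simp
    ring

theorem hasSum_succ_cube_mul_pow (h0 : 0 ≤ q) (h1 : q < 1) :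
    HasSum (fun j : ℕ => ((j : ℝ) + 1) ^ 3 * q ^ (j + 1))
      (q * (1 + 4 * q + q ^ 2) / (1 - q) ^ 4) := by
  have h := (((hasSum_choose_mul_pow 3 h0 h1).mul_left 6).sub
    ((hasSum_choose_mul_pow 2 h0 h1).mul_left 6)).add (hasSum_choose_mul_pow 1 h0 h1)
  have hq : 1 - q ≠ 0 := by linarith
  convert! h using 1
  · ext j
    rw [cast_choose_three, cast_choose_two, Nat.choose_one_right]
    push_cast
    ring
  · field_simp
    ring

theorem hasSum_pow_mul_one_sub_cos (h0 : 0 ≤ q) (h1 : q < 1) (v : ℝ) :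
    HasSum (fun j : ℕ => q ^ (j + 1) * (1 - cos ((j + 1) * v)))
      (q * (1 - cos v) * (1 + q) / ((1 - q) * ((1 - q) ^ 2 + 2 * q * (1 - cos v)))) := by
  set z : ℂ := q * Complex.exp (v * Complex.I) with hz
  have hzn : ‖z‖ < 1 := by
    rw [hz, norm_mul, Complex.norm_exp_ofReal_mul_I, mul_one, Complex.norm_real,
      Real.norm_of_nonneg h0]
    exact h1
  have hg := Complex.hasSum_re ((hasSum_geometric_of_norm_lt_one hzn).mul_left z)
  have hsub := (hasSum_pow_succ h0 h1).sub hg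
  have hzre : z.re = q * cos v := by
    simp [hz, Complex.exp_ofReal_mul_I_re]
  have hzim : z.im = q * sin v := by
    simp [hz, Complex.exp_ofReal_mul_I_im]
  have hns : Complex.normSq (1 - z) = (1 - q) ^ 2 + 2 * q * (1 - cos v) := by
    rw [Complex.normSq_apply, Complex.sub_re, Complex.sub_im, hzre, hzim, Complex.one_re,
      Complex.one_im]
    linear_combination q ^ 2 * sin_sq_add_cos_sq v
  have hpos : 0 < (1 - q) ^ 2 + 2 * q * (1 - cos v) := by
    have : 0 < 1 - q := by linarith
    have := cos_le_one v
    have : 0 ≤ 2 * q * (1 - cos v) := by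
      apply mul_nonneg <;> linarith
    positivity
  convert! hsub using 1
  · ext j
    rw [← pow_succ', hz, mul_pow, ← Complex.exp_nat_mul]
    have : ((j + 1 : ℕ) : ℂ) * (v * Complex.I) = (((j + 1) * v : ℝ) : ℂ) * Complex.I := by
      push_cast; ring
    rw [this, ← Complex.ofReal_pow, Complex.re_ofReal_mul, Complex.exp_ofReal_mul_I_re]
    ring
  · rw [Complex.mul_re, Complex.inv_re, Complex.inv_im, hns, Complex.sub_re, Complex.sub_im,
      hzre, hzim, Complex.one_re, Complex.one_im]
    have hq : 1 - q ≠ 0 := by linarith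
    obtain ⟨N, hN⟩ : ∃ N, N = (1 - q) ^ 2 + 2 * q * (1 - cos v) := ⟨_, rfl⟩
    rw [← hN] at hpos ⊢
    field_simp
    linear_combination (-q) * hN - (1 - q) * q ^ 2 * sin_sq_add_cos_sq v

end GeometricSums

section ScalarBounds

/-- The quantity `(1 - q)² / q` for `q = exp (-y)`. -/
noncomputable def spread (y : ℝ) : ℝ := 2 * cosh y - 2

theorem spread_mul_exp (y : ℝ) : (1 - exp (-y)) ^ 2 = spread y * exp (-y) := by
  have : exp y * exp (-y) = 1 := by rw [← exp_add]; simp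
  rw [spread, cosh_eq]
  linear_combination -this

theorem spread_lower (y : ℝ) : y ^ 2 * (1 + y ^ 2 / 12 + y ^ 4 / 360) ≤ spread y := by
  have h := sum_le_hasSum (Finset.range 4) (fun n _ => by
    rw [pow_mul]; positivity) (Real.hasSum_cosh y)
  simp [Finset.sum_range_succ, Nat.factorial] at h
  rw [spread]
  linarith

theorem sq_le_spread (y : ℝ) : y ^ 2 ≤ spread y :=
  le_trans (le_mul_of_one_le_right (sq_nonneg y) (by
    have : 0 ≤ y ^ 2 / 12 + y ^ 4 / 360 := by positivity
    linarith)) (spread_lower y)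

variable {y : ℝ}

theorem spread_pos (hy : 0 < y) : 0 < spread y := lt_of_lt_of_le (by positivity) (sq_le_spread y)

theorem exp_neg_lt_one (hy : 0 < y) : exp (-y) < 1 := by
  rw [exp_lt_one_iff]; linarith

theorem geometric_le (hy : 0 < y) : exp (-y) / (1 - exp (-y)) ≤ 1 / y := by
  have h1 := exp_neg_lt_one hy
  rw [div_le_div_iff₀ (by linarith) hy]
  have h2 := add_one_le_exp y
  have h3 : exp y * exp (-y) = 1 := by rw [← exp_add]; simp
  nlinarith [exp_pos (-y)]

theorem le_coth (hy : 0 < y) : 2 / y ≤ (1 + exp (-y)) / (1 - exp (-y)) := by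
  have h1 := exp_neg_lt_one hy
  rw [div_le_div_iff₀ hy (by linarith)]
  have hmono : AntitoneOn (fun t : ℝ => 2 * (1 - exp (-t)) - (1 + exp (-t)) * t) (Set.Ici 0) := by
    refine antitoneOn_of_deriv_nonpos (convex_Ici 0) (by fun_prop) (by fun_prop) fun t ht => ?_
    have hd : HasDerivAt (fun t : ℝ => 2 * (1 - exp (-t)) - (1 + exp (-t)) * t)
        (2 * exp (-t) - (-exp (-t) * t + (1 + exp (-t)))) t := by
      have he : HasDerivAt (fun t : ℝ => exp (-t)) (-exp (-t)) t := by
        simpa using (hasDerivAt_neg t).exp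
      convert! ((he.const_sub 1).const_mul 2).sub ((he.const_add 1).mul (hasDerivAt_id t)) using 1
      simp
    rw [hd.deriv]
    have h2 := add_one_le_exp t
    have h3 : exp t * exp (-t) = 1 := by rw [← exp_add]; simp
    nlinarith [exp_pos (-t)]
  have := hmono (Set.mem_Ici.mpr le_rfl) (Set.mem_Ici.mpr hy.le) hy.le
  simp at this
  linarith

theorem le_geometric (hy : 0 < y) : 1 / y - 1 / 2 ≤ exp (-y) / (1 - exp (-y)) := by
  have h1 := exp_neg_lt_one hy
  have h := le_coth hy
  have : (1 + exp (-y)) / (1 - exp (-y)) = 2 * (exp (-y) / (1 - exp (-y))) + 1 := by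
    have : 1 - exp (-y) ≠ 0 := by linarith
    field_simp
    ring
  rw [this] at h
  have : 2 / y = 2 * (1 / y) := by ring
  linarith

theorem linear_geometric_eq (hy : 0 < y) : exp (-y) / (1 - exp (-y)) ^ 2 = 1 / spread y := by
  have := spread_pos hy
  have := exp_pos (-y)
  rw [spread_mul_exp]
  field_simp

theorem linear_geometric_le (hy : 0 < y) : exp (-y) / (1 - exp (-y)) ^ 2 ≤ 1 / y ^ 2 := by
  rw [linear_geometric_eq hy]
  exact one_div_le_one_div_of_le (by positivity) (sq_le_spread y)

theorem square_geometric_le (hy : 0 < y) :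
    exp (-y) * (1 + exp (-y)) / (1 - exp (-y)) ^ 3 ≤ 2 / y ^ 3 := by
  have hq := exp_pos (-y)
  have h1 : 0 < 1 - exp (-y) := by linarith [exp_neg_lt_one hy]
  have hD := spread_pos hy
  have hlow := spread_lower y
  refine abs_le_of_sq_le_sq' ?_ (by positivity) |>.2
  have hsq : (exp (-y) * (1 + exp (-y)) / (1 - exp (-y)) ^ 3) ^ 2
      = (spread y + 4) / spread y ^ 3 := by
    have h4 : (1 + exp (-y)) ^ 2 = (spread y + 4) * exp (-y) := by
      linear_combination spread_mul_exp y
    have h6 : ((1 - exp (-y)) ^ 3) ^ 2 = (spread y * exp (-y)) ^ 3 := by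
      rw [← spread_mul_exp]; ring
    rw [div_pow, mul_pow, h4, h6]
    field_simp
  rw [hsq, div_pow, div_le_div_iff₀ (by positivity) (by positivity)]
  set D := spread y
  obtain ⟨w, hw⟩ : ∃ w, w = y ^ 2 := ⟨_, rfl⟩
  have hw0 : 0 < w := hw ▸ by positivity
  have hlow' : w * (1 + w / 12 + w ^ 2 / 360) ≤ D := by
    rw [hw]; convert hlow using 3; ring
  have e1 : (y ^ 3) ^ 2 = w ^ 3 := by rw [hw]; ring
  rw [e1]
  set E := w * (1 + w / 12 + w ^ 2 / 360) with hE
  have hE0 : 0 < E := by positivity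
  have hEE : w ^ 3 ≤ 4 * E ^ 2 := by
    rw [hE]
    have : 0 ≤ w ^ 2 * (4 + 3 * w + w ^ 3) := by positivity
    nlinarith [pow_pos hw0 2, pow_pos hw0 3, pow_pos hw0 4, pow_pos hw0 5, pow_pos hw0 6]
  have hmain : (E + 4) * w ^ 3 ≤ 4 * E ^ 3 := by
    have hp : (1 + w / 12 + w ^ 2 / 360) * w + 4 ≤ 4 * (1 + w / 12 + w ^ 2 / 360) ^ 3 := by
      nlinarith [pow_pos hw0 2, pow_pos hw0 3, pow_pos hw0 4, pow_pos hw0 5, pow_pos hw0 6]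
    calc (E + 4) * w ^ 3 = ((1 + w / 12 + w ^ 2 / 360) * w + 4) * w ^ 3 := by rw [hE]; ring
      _ ≤ (4 * (1 + w / 12 + w ^ 2 / 360) ^ 3) * w ^ 3 := by gcongr
      _ = 4 * E ^ 3 := by rw [hE]; ring
  have h3 : D ^ 3 - E ^ 3 = (D - E) * (D ^ 2 + D * E + E ^ 2) := by ring
  have h5 : w ^ 3 * (D - E) ≤ 4 * (D ^ 3 - E ^ 3) := by
    rw [h3]
    have : w ^ 3 ≤ 4 * (D ^ 2 + D * E + E ^ 2) := by nlinarith [mul_pos hD hE0]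
    nlinarith
  norm_num
  linarith

theorem cubic_geometric_le (hy : 0 < y) :
    exp (-y) * (1 + 4 * exp (-y) + exp (-y) ^ 2) / (1 - exp (-y)) ^ 4 ≤ (13 / 2) / y ^ 4 := by
  have hq := exp_pos (-y)
  have hD := spread_pos hy
  have hlow := spread_lower y
  have hsq : exp (-y) * (1 + 4 * exp (-y) + exp (-y) ^ 2) / (1 - exp (-y)) ^ 4
      = (spread y + 6) / spread y ^ 2 := by
    have h4 : 1 + 4 * exp (-y) + exp (-y) ^ 2 = (spread y + 6) * exp (-y) := by
      linear_combination spread_mul_exp y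
    have h6 : (1 - exp (-y)) ^ 4 = (spread y * exp (-y)) ^ 2 := by
      rw [← spread_mul_exp]; ring
    rw [h4, h6]
    field_simp
  rw [hsq]
  set D := spread y
  obtain ⟨w, hw⟩ : ∃ w, w = y ^ 2 := ⟨_, rfl⟩
  have hw0 : 0 < w := hw ▸ by positivity
  have hlow' : w * (1 + w / 12 + w ^ 2 / 360) ≤ D := by
    rw [hw]; convert hlow using 3; ring
  have e1 : y ^ 4 = w ^ 2 := by rw [hw]; ring
  rw [e1, div_le_div_iff₀ (by positivity) (by positivity)]
  set E := w * (1 + w / 12 + w ^ 2 / 360) with hE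
  have hE0 : 0 < E := by positivity
  have hmain : (E + 6) * w ^ 2 ≤ 13 / 2 * E ^ 2 := by
    have hp : (1 + w / 12 + w ^ 2 / 360) * w + 6 ≤ 13 / 2 * (1 + w / 12 + w ^ 2 / 360) ^ 2 := by
      nlinarith [pow_pos hw0 2, pow_pos hw0 3, pow_pos hw0 4, sq_nonneg (w - 10),
        sq_nonneg (w * (w - 10))]
    calc (E + 6) * w ^ 2 = ((1 + w / 12 + w ^ 2 / 360) * w + 6) * w ^ 2 := by rw [hE]; ring
      _ ≤ (13 / 2 * (1 + w / 12 + w ^ 2 / 360) ^ 2) * w ^ 2 := by gcongr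
      _ = _ := by rw [hE]; ring
  have hEw : w ≤ E := by
    rw [hE]
    have : 0 ≤ w * (w / 12 + w ^ 2 / 360) := by positivity
    linarith
  have h5 : w ^ 2 * (D - E) ≤ 13 / 2 * (D ^ 2 - E ^ 2) := by
    have h1 : w ^ 2 * E ≤ (E + 6) * w ^ 2 := by nlinarith [sq_nonneg w]
    have h2 : w ^ 2 ≤ 13 / 2 * E := by
      have : w ^ 2 * E ≤ 13 / 2 * E * E := by nlinarith
      exact le_of_mul_le_mul_right this hE0
    have h3 : 13 / 2 * (D ^ 2 - E ^ 2) = 13 / 2 * (D + E) * (D - E) := by ring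
    rw [h3]
    have : w ^ 2 ≤ 13 / 2 * (D + E) := by nlinarith
    exact mul_le_mul_of_nonneg_right this (by linarith)
  linarith

end ScalarBounds

section Moments

/-- The coefficient of the term indexed by `(i, j)` in the logarithm of the generating function
at `exp (-x)`. -/
noncomputable def weight (x : ℝ) (ij : ℕ × ℕ) : ℝ :=
  exp (-x) ^ ((ij.1 + 1) * (ij.2 + 1)) / ((ij.1 : ℝ) + 1)

/-- The exponent of the term indexed by `(i, j)` in the logarithm of the generating function. -/
def area (ij : ℕ × ℕ) : ℝ := ((ij.1 : ℝ) + 1) * ((ij.2 : ℝ) + 1)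

theorem weight_nonneg (x : ℝ) (ij : ℕ × ℕ) : 0 ≤ weight x ij := by
  rw [weight]; positivity

theorem area_nonneg (ij : ℕ × ℕ) : 0 ≤ area ij := by
  rw [area]; positivity

theorem weight_mk (x : ℝ) (i j : ℕ) :
    weight x (i, j) = exp (-(((i : ℝ) + 1) * x)) ^ (j + 1) / ((i : ℝ) + 1) := by
  rw [weight, pow_mul, ← exp_nat_mul]
  congr 3
  push_cast
  ring_nf

/-- The moments of the areas with respect to the weights. -/
noncomputable def moment (a : ℕ) (x : ℝ) : ℝ := ∑' ij, weight x ij * area ij ^ a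

variable {x : ℝ}

theorem summable_weight_mul_pow (a : ℕ) (hx : 0 < x) :
    Summable fun ij => weight x ij * area ij ^ a := by
  refine Summable.of_nonneg_of_le
    (fun ij => mul_nonneg (weight_nonneg x ij) (pow_nonneg (area_nonneg ij) a)) (fun ij => ?_)
    (summable_geometric_prod a a (exp_pos (-x)).le (exp_neg_lt_one hx))
  rw [weight, area, mul_pow]
  have h : exp (-x) ^ ((ij.1 + 1) * (ij.2 + 1)) / ((ij.1 : ℝ) + 1) ≤
      exp (-x) ^ ((ij.1 + 1) * (ij.2 + 1)) :=
    div_le_self (by positivity) (by linarith [Nat.cast_nonneg (α := ℝ) ij.1])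
  calc _ ≤ exp (-x) ^ ((ij.1 + 1) * (ij.2 + 1)) *
        (((ij.1 : ℝ) + 1) ^ a * ((ij.2 : ℝ) + 1) ^ a) := by gcongr
    _ = _ := by ring

theorem hasSum_inv_succ_sq (c : ℝ) :
    HasSum (fun i : ℕ => c / ((i : ℝ) + 1) ^ 2) (c * (π ^ 2 / 6)) := by
  have h := ((hasSum_nat_add_iff' 1).mpr hasSum_zeta_two).mul_left c
  simpa [div_eq_mul_inv] using h

theorem tsum_le_of_fiber_le {f : ℕ × ℕ → ℝ} (hf : Summable f) {g : ℕ → ℝ} {c : ℝ}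
    (hg : ∀ i, HasSum (fun j => f (i, j)) (g i)) (hle : ∀ i, g i ≤ c / ((i : ℝ) + 1) ^ 2) :
    ∑' ij, f ij ≤ c * (π ^ 2 / 6) :=
  hasSum_le hle (hf.hasSum.prod_fiberwise hg) (hasSum_inv_succ_sq c)

theorem sum_fiber_le_tsum {f : ℕ × ℕ → ℝ} (hf : Summable f) (h0 : ∀ ij, 0 ≤ f ij) {g : ℕ → ℝ}
    (hg : ∀ i, HasSum (fun j => f (i, j)) (g i)) (K : ℕ) :
    ∑ i ∈ Finset.range K, g i ≤ ∑' ij, f ij :=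
  sum_le_hasSum _ (fun i _ => (hg i).nonneg fun j => h0 (i, j)) (hf.hasSum.prod_fiberwise hg)

theorem succ_mul_pos (hx : 0 < x) (i : ℕ) : 0 < ((i : ℝ) + 1) * x := by positivity

theorem hasSum_fiber_zero (hx : 0 < x) (i : ℕ) :
    HasSum (fun j => weight x (i, j) * area (i, j) ^ 0)
      (exp (-((i + 1) * x)) / (1 - exp (-((i + 1) * x))) / ((i : ℝ) + 1)) := by
  have h := (hasSum_pow_succ (exp_pos _).le (exp_neg_lt_one (succ_mul_pos hx i))).div_const
    ((i : ℝ) + 1)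
  simpa [weight_mk] using h

theorem hasSum_fiber_one (hx : 0 < x) (i : ℕ) :
    HasSum (fun j => weight x (i, j) * area (i, j) ^ 1)
      (exp (-((i + 1) * x)) / (1 - exp (-((i + 1) * x))) ^ 2) := by
  refine (hasSum_succ_mul_pow (exp_pos _).le (exp_neg_lt_one (succ_mul_pos hx i))).congr_fun ?_
  intro j
  rw [weight_mk, area]
  field_simp

theorem hasSum_fiber_two (hx : 0 < x) (i : ℕ) :
    HasSum (fun j => weight x (i, j) * area (i, j) ^ 2) (((i : ℝ) + 1) *
      (exp (-((i + 1) * x)) * (1 + exp (-((i + 1) * x))) / (1 - exp (-((i + 1) * x))) ^ 3)) := by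
  refine ((hasSum_succ_sq_mul_pow (exp_pos _).le
    (exp_neg_lt_one (succ_mul_pos hx i))).mul_left ((i : ℝ) + 1)).congr_fun ?_
  intro j
  rw [weight_mk, area]
  field_simp

theorem hasSum_fiber_three (hx : 0 < x) (i : ℕ) :
    HasSum (fun j => weight x (i, j) * area (i, j) ^ 3) (((i : ℝ) + 1) ^ 2 *
      (exp (-((i + 1) * x)) * (1 + 4 * exp (-((i + 1) * x)) + exp (-((i + 1) * x)) ^ 2) /
        (1 - exp (-((i + 1) * x))) ^ 4)) := by
  refine ((hasSum_succ_cube_mul_pow (exp_pos _).le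
    (exp_neg_lt_one (succ_mul_pos hx i))).mul_left (((i : ℝ) + 1) ^ 2)).congr_fun ?_
  intro j
  rw [weight_mk, area]
  field_simp

theorem moment_zero_le (hx : 0 < x) : moment 0 x ≤ 1 / x * (π ^ 2 / 6) := by
  refine tsum_le_of_fiber_le (summable_weight_mul_pow 0 hx) (hasSum_fiber_zero hx) fun i => ?_
  calc _ ≤ 1 / (((i : ℝ) + 1) * x) / ((i : ℝ) + 1) :=
        div_le_div_of_nonneg_right (geometric_le (succ_mul_pos hx i)) (by positivity)
    _ = _ := by field_simp

theorem moment_one_le (hx : 0 < x) : moment 1 x ≤ 1 / x ^ 2 * (π ^ 2 / 6) := by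
  refine tsum_le_of_fiber_le (summable_weight_mul_pow 1 hx) (hasSum_fiber_one hx) fun i => ?_
  refine (linear_geometric_le (succ_mul_pos hx i)).trans_eq ?_
  field_simp

theorem moment_two_le (hx : 0 < x) : moment 2 x ≤ 2 / x ^ 3 * (π ^ 2 / 6) := by
  refine tsum_le_of_fiber_le (summable_weight_mul_pow 2 hx) (hasSum_fiber_two hx) fun i => ?_
  calc _ ≤ ((i : ℝ) + 1) * (2 / (((i : ℝ) + 1) * x) ^ 3) :=
        mul_le_mul_of_nonneg_left (square_geometric_le (succ_mul_pos hx i)) (by positivity)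
    _ = _ := by field_simp

theorem moment_three_le (hx : 0 < x) : moment 3 x ≤ 13 / 2 / x ^ 4 * (π ^ 2 / 6) := by
  refine tsum_le_of_fiber_le (summable_weight_mul_pow 3 hx) (hasSum_fiber_three hx) fun i => ?_
  calc _ ≤ ((i : ℝ) + 1) ^ 2 * (13 / 2 / (((i : ℝ) + 1) * x) ^ 4) :=
        mul_le_mul_of_nonneg_left (cubic_geometric_le (succ_mul_pos hx i)) (by positivity)
    _ = _ := by field_simp

theorem moment_term_nonneg (a : ℕ) (x : ℝ) (ij : ℕ × ℕ) : 0 ≤ weight x ij * area ij ^ a :=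
  mul_nonneg (weight_nonneg x ij) (pow_nonneg (area_nonneg ij) a)

theorem le_moment_zero (hx : 0 < x) : 205 / 144 * (1 / x) - 25 / 24 ≤ moment 0 x := by
  refine le_trans ?_ (sum_fiber_le_tsum (summable_weight_mul_pow 0 hx) (moment_term_nonneg 0 x)
    (hasSum_fiber_zero hx) 4)
  have h : ∑ i ∈ Finset.range 4, (1 / (((i : ℝ) + 1) * x) - 1 / 2) / ((i : ℝ) + 1) =
      205 / 144 * (1 / x) - 25 / 24 := by
    simp only [Finset.sum_range_succ, Finset.sum_range_zero]
    push_cast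
    field_simp
    ring
  rw [← h]
  refine Finset.sum_le_sum fun i _ => ?_
  gcongr
  exact le_geometric (succ_mul_pos hx i)

theorem le_moment_one (hx : 0 < x) : exp (-x) / x ^ 2 ≤ moment 1 x := by
  refine le_trans ?_ (sum_fiber_le_tsum (summable_weight_mul_pow 1 hx) (moment_term_nonneg 1 x)
    (hasSum_fiber_one hx) 1)
  have h1 := exp_neg_lt_one hx
  have h2 := add_one_le_exp (-x)
  simp only [Finset.sum_range_one, Nat.cast_zero, zero_add, one_mul]
  have : 0 < 1 - exp (-x) := by linarith
  gcongr
  linarith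

theorem weight_antitone {x₀ : ℝ} (h : x₀ ≤ x) (ij : ℕ × ℕ) : weight x ij ≤ weight x₀ ij := by
  rw [weight, weight]
  gcongr

theorem continuousOn_moment (a : ℕ) {x₀ : ℝ} (h0 : 0 < x₀) :
    ContinuousOn (moment a) (Set.Ici x₀) := by
  refine continuousOn_tsum (fun ij => ?_) (summable_weight_mul_pow a h0) fun ij x hx => ?_
  · unfold weight
    fun_prop
  · rw [Real.norm_of_nonneg (moment_term_nonneg a x ij)]
    exact mul_le_mul_of_nonneg_right (weight_antitone hx ij) (pow_nonneg (area_nonneg ij) a)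

/-- The saddle point equation has a solution. -/
theorem exists_moment_one_eq {n : ℕ} (hn : 1 ≤ n) : ∃ x, 0 < x ∧ moment 1 x = n := by
  have hn1 : (1 : ℝ) ≤ n := by exact_mod_cast hn
  have hs : 0 < √(n : ℝ) := Real.sqrt_pos.mpr (by linarith)
  have hs1 : 1 ≤ √(n : ℝ) := Real.one_le_sqrt.mpr hn1
  have hsq : √(n : ℝ) ^ 2 = n := Real.sq_sqrt (by linarith)
  have hpos : 0 < 1 / (2 * √(n : ℝ)) := by positivity
  have hlr : 1 / (2 * √(n : ℝ)) ≤ 2 / √(n : ℝ) := by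
    rw [div_le_div_iff₀ (by positivity) hs]; linarith
  have hmem := intermediate_value_Icc' hlr
    ((continuousOn_moment 1 hpos).mono Set.Icc_subset_Ici_self)
  have hl : (n : ℝ) ≤ moment 1 (1 / (2 * √(n : ℝ))) := by
    refine le_trans ?_ (le_moment_one hpos)
    have h1 : 1 / (2 * √(n : ℝ)) ≤ 1 / 2 := by
      apply one_div_le_one_div_of_le <;> linarith
    have h2 := add_one_le_exp (-(1 / (2 * √(n : ℝ))))
    rw [div_pow, mul_pow, hsq, one_pow, div_div_eq_mul_div, div_one]
    nlinarith
  have hr : moment 1 (2 / √(n : ℝ)) ≤ n := by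
    refine (moment_one_le (by positivity)).trans ?_
    rw [div_pow, hsq]
    have hpi := pi_lt_four
    have : π ^ 2 ≤ 16 := by nlinarith [pi_pos]
    field_simp
    linarith
  obtain ⟨x, hx, hxn⟩ := hmem ⟨hr, hl⟩
  exact ⟨x, hpos.trans_le hx.1, hxn⟩

end Moments

section Complex

open Complex (I)

variable {x : ℝ}

theorem norm_exp_neg_mul (hx : 0 < x) (θ : ℝ) :
    ‖((exp (-x) : ℝ) : ℂ) * Complex.exp (θ * I)‖ < 1 := by
  rw [norm_mul, Complex.norm_exp_ofReal_mul_I, mul_one, Complex.norm_real,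
    Real.norm_of_nonneg (exp_pos _).le]
  exact exp_neg_lt_one hx

/-- The decay of the modulus of the generating function on the circle of radius `exp (-x)`. -/
noncomputable def decay (x θ : ℝ) : ℝ := ∑' ij, weight x ij * (1 - cos (area ij * θ))

/-- The deviation of the phase of the generating function from its linear part. -/
noncomputable def phase (x θ : ℝ) : ℝ := ∑' ij, weight x ij * (area ij * θ - sin (area ij * θ))

theorem summable_weight (hx : 0 < x) : Summable (weight x) := by
  simpa using summable_weight_mul_pow 0 hx

theorem summable_decay (hx : 0 < x) (θ : ℝ) :
    Summable fun ij => weight x ij * (1 - cos (area ij * θ)) := by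
  refine Summable.of_nonneg_of_le (fun ij => mul_nonneg (weight_nonneg x ij) ?_) (fun ij => ?_)
    ((summable_weight hx).mul_right 2)
  · linarith [cos_le_one (area ij * θ)]
  · exact mul_le_mul_of_nonneg_left (by linarith [neg_one_le_cos (area ij * θ)])
      (weight_nonneg x ij)

theorem summable_weight_mul_sin (hx : 0 < x) (θ : ℝ) :
    Summable fun ij => weight x ij * sin (area ij * θ) := by
  refine Summable.of_norm_bounded (summable_weight hx) fun ij => ?_
  rw [norm_mul, Real.norm_of_nonneg (weight_nonneg x ij)]
  exact mul_le_of_le_one_right (weight_nonneg x ij) (abs_sin_le_one _)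

theorem summable_phase (hx : 0 < x) (θ : ℝ) :
    Summable fun ij => weight x ij * (area ij * θ - sin (area ij * θ)) := by
  refine (((summable_weight_mul_pow 1 hx).mul_right θ).sub
    (summable_weight_mul_sin hx θ)).congr fun ij => ?_
  ring

theorem lambert_eq (hx : 0 < x) (θ : ℝ) :
    lambert (((exp (-x) : ℝ) : ℂ) * Complex.exp (θ * I)) =
      ((moment 0 x - decay x θ : ℝ) : ℂ) + ((moment 1 x * θ - phase x θ : ℝ) : ℂ) * I := by
  have h := (summable_lambert (norm_exp_neg_mul hx θ)).hasSum
  have hterm (ij : ℕ × ℕ) : (((exp (-x) : ℝ) : ℂ) * Complex.exp (θ * I)) ^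
      ((ij.1 + 1) * (ij.2 + 1)) / ((ij.1 : ℂ) + 1) =
      (weight x ij : ℂ) * Complex.exp ((area ij * θ : ℝ) * I) := by
    rw [mul_pow, ← Complex.exp_nat_mul, weight, area]
    push_cast
    ring_nf
  simp only [hterm] at h
  have hre := Complex.hasSum_re h
  have him := Complex.hasSum_im h
  simp only [Complex.re_ofReal_mul, Complex.im_ofReal_mul, Complex.exp_ofReal_mul_I_re,
    Complex.exp_ofReal_mul_I_im] at hre him
  have hre' : (∑' ij, weight x ij * cos (area ij * θ)) = moment 0 x - decay x θ := by
    rw [moment, decay, ← (summable_weight_mul_pow 0 hx).tsum_sub (summable_decay hx θ)]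
    refine tsum_congr fun ij => ?_
    ring
  have him' : (∑' ij, weight x ij * sin (area ij * θ)) = moment 1 x * θ - phase x θ := by
    rw [moment, phase, ← tsum_mul_right,
      ← ((summable_weight_mul_pow 1 hx).mul_right θ).tsum_sub (summable_phase hx θ)]
    refine tsum_congr fun ij => ?_
    ring
  apply Complex.ext
  · rw [lambert]
    simp only [hterm]
    rw [← hre.tsum_eq, hre']
    simp
  · rw [lambert]
    simp only [hterm]
    rw [← him.tsum_eq, him']
    simp

theorem lambert_exp_neg (hx : 0 < x) : lambert ((exp (-x) : ℝ) : ℂ) = (moment 0 x : ℝ) := by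
  have h := lambert_eq hx 0
  simpa [decay, phase] using h

theorem p_mul_exp_le (hx : 0 < x) (n : ℕ) : p n * exp (-x) ^ n ≤ exp (moment 0 x) := by
  have h := hasSum_p_mul_pow (z := ((exp (-x) : ℝ) : ℂ)) (by
    simpa using norm_exp_neg_mul hx 0)
  rw [lambert_exp_neg hx] at h
  have h' : HasSum (fun n => p n * exp (-x) ^ n) (exp (moment 0 x)) := by exact_mod_cast h
  exact le_hasSum h' n fun m _ => mul_nonneg (p_nonneg m) (by positivity)

theorem decay_le (hx : 0 < x) (θ : ℝ) : decay x θ ≤ moment 2 x * θ ^ 2 / 2 := by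
  rw [moment, ← tsum_mul_right, ← tsum_div_const]
  refine (summable_decay hx θ).tsum_le_tsum (fun ij => ?_)
    (((summable_weight_mul_pow 2 hx).mul_right _).div_const _)
  have h := one_sub_sq_div_two_le_cos (x := area ij * θ)
  calc _ ≤ weight x ij * ((area ij * θ) ^ 2 / 2) :=
        mul_le_mul_of_nonneg_left (by linarith) (weight_nonneg x ij)
    _ = _ := by ring

theorem abs_sub_sin_le (u : ℝ) : |u - sin u| ≤ |u| ^ 3 / 6 := by
  have key (v : ℝ) (hv : 0 ≤ v) : |v - sin v| ≤ v ^ 3 / 6 := by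
    rw [abs_of_nonneg (by linarith [sin_le hv])]
    have := sin_ge_sub_cube hv
    linarith
  rcases le_total 0 u with h | h
  · rw [abs_of_nonneg h]; exact key u h
  · have := key (-u) (by linarith)
    rw [sin_neg, ← abs_neg] at this
    rw [abs_of_nonpos h]
    convert this using 2
    ring

theorem abs_phase_le (hx : 0 < x) (θ : ℝ) : |phase x θ| ≤ moment 3 x * |θ| ^ 3 / 6 := by
  rw [moment, ← tsum_mul_right, ← tsum_div_const, phase, ← Real.norm_eq_abs]
  refine tsum_of_norm_bounded
    (((summable_weight_mul_pow 3 hx).mul_right _).div_const _).hasSum fun ij => ?_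
  rw [norm_mul, Real.norm_of_nonneg (weight_nonneg x ij), Real.norm_eq_abs]
  calc _ ≤ weight x ij * (|area ij * θ| ^ 3 / 6) :=
        mul_le_mul_of_nonneg_left (abs_sub_sin_le _) (weight_nonneg x ij)
    _ = _ := by rw [abs_mul, abs_of_nonneg (area_nonneg ij)]; ring

theorem hasSum_fiber_decay (hx : 0 < x) (θ : ℝ) (i : ℕ) :
    HasSum (fun j => weight x (i, j) * (1 - cos (area (i, j) * θ)))
      ((1 + exp (-((i + 1) * x))) / (1 - exp (-((i + 1) * x))) * (1 - cos ((i + 1) * θ)) /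
        (spread ((i + 1) * x) + 2 * (1 - cos ((i + 1) * θ))) / ((i : ℝ) + 1)) := by
  have hy := succ_mul_pos hx i
  have h := (hasSum_pow_mul_one_sub_cos (exp_pos _).le (exp_neg_lt_one hy)
    ((i + 1) * θ)).div_const ((i : ℝ) + 1)
  convert! h using 1
  · ext j
    rw [weight_mk, area]
    ring_nf
  · rw [spread_mul_exp]
    congr 1
    have h1 := exp_neg_lt_one hy
    have h2 : 1 - exp (-((i + 1) * x)) ≠ 0 := by linarith
    have h3 : 0 < spread ((i + 1) * x) + 2 * (1 - cos ((i + 1) * θ)) := by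
      linarith [spread_pos hy, cos_le_one (((i : ℝ) + 1) * θ)]
    have h4 := exp_pos (-(((i : ℝ) + 1) * x))
    have h5 : spread ((i + 1) * x) * exp (-((i + 1) * x)) +
        2 * exp (-((i + 1) * x)) * (1 - cos ((i + 1) * θ)) =
        exp (-((i + 1) * x)) * (spread ((i + 1) * x) + 2 * (1 - cos ((i + 1) * θ))) := by ring
    rw [h5]
    field_simp

theorem sum_le_decay (hx : 0 < x) (θ : ℝ) (K : ℕ) :
    ∑ i ∈ Finset.range K, 2 / (((i : ℝ) + 1) * x) * (1 - cos ((i + 1) * θ)) /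
        (spread ((i + 1) * x) + 2 * (1 - cos ((i + 1) * θ))) / ((i : ℝ) + 1) ≤ decay x θ := by
  refine le_trans ?_ (sum_fiber_le_tsum (summable_decay hx θ)
    (fun ij => mul_nonneg (weight_nonneg x ij) (by linarith [cos_le_one (area ij * θ)]))
    (hasSum_fiber_decay hx θ) K)
  refine Finset.sum_le_sum fun i _ => ?_
  have hy := succ_mul_pos hx i
  have h1 : 0 ≤ 1 - cos ((i + 1) * θ) := by linarith [cos_le_one (((i : ℝ) + 1) * θ)]
  have h3 := spread_pos hy
  exact div_le_div_of_nonneg_right (div_le_div_of_nonneg_right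
    (mul_le_mul_of_nonneg_right (le_coth hy) h1) (by positivity)) (by positivity)

end Complex

section LogForm

theorem p_pos (n : ℕ) : 0 < p n := by
  rw [p]
  exact_mod_cast Fintype.card_pos

/-- The logarithmic form of the inequality. -/
def RootLogConvexAt (n : ℕ) : Prop :=
  (n : ℝ) ^ 2 * (2 * log (p n) - log (p (n - 1)) - log (p (n + 1))) +
    n * (log (p (n + 1)) - log (p (n - 1))) ≤ 2 * log (p n)

theorem RootLogConvexAt.rpow_le {n : ℕ} (hn : 2 ≤ n) (h : RootLogConvexAt n) :
    (p n ^ ((1 : ℝ) / (n : ℝ))) ^ 2 ≤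
      p (n - 1) ^ ((1 : ℝ) / ((n : ℝ) - 1)) * p (n + 1) ^ ((1 : ℝ) / ((n : ℝ) + 1)) := by
  have hn' : (2 : ℝ) ≤ n := by exact_mod_cast hn
  have h0 := p_pos n
  have h1 := p_pos (n - 1)
  have h2 := p_pos (n + 1)
  rw [← log_le_log_iff (by positivity) (by positivity), log_mul (by positivity) (by positivity),
    log_pow, log_rpow h0, log_rpow h1, log_rpow h2]
  rw [RootLogConvexAt] at h
  have hm : (0 : ℝ) < n - 1 := by linarith
  have hn0 : (0 : ℝ) < n := by linarith
  push_cast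
  rw [← sub_nonneg]
  have key : 1 / ((n : ℝ) - 1) * log (p (n - 1)) + 1 / ((n : ℝ) + 1) * log (p (n + 1)) -
      2 * (1 / (n : ℝ) * log (p n)) =
      (2 * log (p n) - ((n : ℝ) ^ 2 * (2 * log (p n) - log (p (n - 1)) - log (p (n + 1))) +
        n * (log (p (n + 1)) - log (p (n - 1))))) / (n * (n - 1) * (n + 1)) := by
    field_simp
    ring
  rw [key]
  exact div_nonneg (by linarith) (by positivity)

theorem rootLogConvexAt_of_pow_le {n : ℕ} (hn : 2 ≤ n)
    (h : Fintype.card (Nat.Partition n) ^ (2 * (n ^ 2 - 1)) ≤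
      Fintype.card (Nat.Partition (n - 1)) ^ (n * (n + 1)) *
        Fintype.card (Nat.Partition (n + 1)) ^ (n * (n - 1))) : RootLogConvexAt n := by
  have h0 := p_pos n
  have h1 := p_pos (n - 1)
  have h2 := p_pos (n + 1)
  have h' : p n ^ (2 * (n ^ 2 - 1)) ≤ p (n - 1) ^ (n * (n + 1)) * p (n + 1) ^ (n * (n - 1)) := by
    rw [p, p, p]
    exact_mod_cast h
  have hl := log_le_log (by positivity) h'
  rw [log_mul (by positivity) (by positivity), log_pow, log_pow, log_pow] at hl
  have e1 : ((n ^ 2 - 1 : ℕ) : ℝ) = (n : ℝ) ^ 2 - 1 := by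
    rw [Nat.cast_sub (Nat.one_le_pow _ _ (by lia))]; push_cast; ring
  have e2 : ((n - 1 : ℕ) : ℝ) = (n : ℝ) - 1 := by
    rw [Nat.cast_sub (by lia)]; push_cast; ring
  rw [Nat.cast_mul, Nat.cast_mul, Nat.cast_mul, e1, e2] at hl
  push_cast at hl
  rw [RootLogConvexAt]
  linarith

theorem rootLogConvexAt_of_rational_le {n a b c : ℕ} (ha : p (n - 1) = a) (hb : p n = b)
    (hc : p (n + 1) = c)
    (h : 500 * (n ^ 2 * b ^ 2 + n * c * c) ≤
      500 * (n ^ 2 * (a * c) + n * a * c) + 693 * (Nat.log2 b * (a * c))) :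
    RootLogConvexAt n := by
  have h0 := p_pos n
  have h1 := p_pos (n - 1)
  have h2 := p_pos (n + 1)
  have hlog : (693 / 1000 : ℝ) * Nat.log2 b ≤ log (p n) := by
    have hb0 : b ≠ 0 := by
      rintro rfl
      simp [hb] at h0
    have hpow : (2 : ℝ) ^ Nat.log2 b ≤ p n := by
      rw [hb]
      exact_mod_cast Nat.log2_self_le hb0
    have := log_le_log (by positivity) hpow
    rw [log_pow] at this
    have h3 := log_two_gt_d9
    have h4 : (0 : ℝ) ≤ Nat.log2 b := Nat.cast_nonneg _
    nlinarith
  have hfst : 2 * log (p n) - log (p (n - 1)) - log (p (n + 1)) ≤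
      p n ^ 2 / (p (n - 1) * p (n + 1)) - 1 := by
    have := log_le_sub_one_of_pos (x := p n ^ 2 / (p (n - 1) * p (n + 1))) (by positivity)
    rw [log_div (by positivity) (by positivity), log_pow, log_mul h1.ne' h2.ne'] at this
    push_cast at this
    linarith
  have hsnd : log (p (n + 1)) - log (p (n - 1)) ≤ p (n + 1) / p (n - 1) - 1 := by
    have := log_le_sub_one_of_pos (x := p (n + 1) / p (n - 1)) (by positivity)
    rwa [log_div h2.ne' h1.ne'] at this
  have h' : 500 * ((n : ℝ) ^ 2 * p n ^ 2 + n * p (n + 1) * p (n + 1)) ≤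
      500 * ((n : ℝ) ^ 2 * (p (n - 1) * p (n + 1)) + n * p (n - 1) * p (n + 1)) +
        693 * (Nat.log2 b * (p (n - 1) * p (n + 1))) := by
    rw [ha, hb, hc]
    exact_mod_cast h
  have hdiv : (n : ℝ) ^ 2 * (p n ^ 2 / (p (n - 1) * p (n + 1)) - 1) +
      n * (p (n + 1) / p (n - 1) - 1) ≤ 2 * (693 / 1000 * Nat.log2 b) := by
    rw [← sub_nonneg]
    have key : 2 * (693 / 1000 * (Nat.log2 b : ℝ)) -
        ((n : ℝ) ^ 2 * (p n ^ 2 / (p (n - 1) * p (n + 1)) - 1) +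
          n * (p (n + 1) / p (n - 1) - 1)) =
        (500 * ((n : ℝ) ^ 2 * (p (n - 1) * p (n + 1)) + n * p (n - 1) * p (n + 1)) +
        693 * (Nat.log2 b * (p (n - 1) * p (n + 1))) -
        500 * ((n : ℝ) ^ 2 * p n ^ 2 + n * p (n + 1) * p (n + 1))) /
          (500 * (p (n - 1) * p (n + 1))) := by
      field_simp
      ring
    rw [key]
    exact div_nonneg (by linarith) (by positivity)
  rw [RootLogConvexAt]
  have i1 := mul_le_mul_of_nonneg_left hfst (sq_nonneg (n : ℝ))
  have i2 := mul_le_mul_of_nonneg_left hsnd (Nat.cast_nonneg (α := ℝ) n)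
  linarith

end LogForm

section PackedPartitions

open Polynomial

/-- A base exceeding all the values of the partition function that are computed. -/
def base : ℕ := 2 ^ 240

theorem base_pos : 0 < base := by
  rw [base]; positivity

/-- The terms with positive sign of the pentagonal number series at `base`. -/
def evenTerms : ℕ → ℕ
  | 0 => 0
  | j + 1 => evenTerms j + (base ^ (j * (6 * j - 1)) + base ^ ((j + 1) * (6 * j + 7)))

/-- The terms with negative sign of the pentagonal number series at `base`. -/
def oddTerms : ℕ → ℕ
  | 0 => 0
  | j + 1 =>
    oddTerms j + (base ^ ((2 * j + 1) * (3 * j + 1)) + base ^ ((2 * j + 1) * (3 * j + 2)))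

/-- Newton iteration for the inverse of `e - o`, starting with modulus `m` and value `y`. -/
def newton (e o : ℕ) : ℕ → ℕ → ℕ → ℕ
  | 0, _, y => y
  | i + 1, m, y => newton e o i (m * m) (y * (2 + y * o % m + (m - y * e % m)) % m)

/-- The number with the values of the partition function as its digits. -/
def packed : ℕ := newton (evenTerms 27) (oddTerms 27) 13 (base ^ 2) 1 % base ^ 4124

set_option maxRecDepth 100000 in
theorem packed_mul_evenTerms :
    packed * evenTerms 27 % base ^ 4124 = (1 + packed * oddTerms 27) % base ^ 4124 := by
  decide +kernel

/-- The part of the pentagonal number series used in the computation. -/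
noncomputable def pentagonalPoly (K : ℕ) : ℤ[X] :=
  ∑ j ∈ Finset.range K, (X ^ pentagonal (2 * j) + X ^ pentagonal (-(2 * j + 2)) -
    X ^ pentagonal (2 * j + 1) - X ^ pentagonal (-(2 * j + 1)))

theorem eval_pentagonalPoly (K : ℕ) :
    (pentagonalPoly K).eval (base : ℤ) = (evenTerms K : ℤ) - oddTerms K := by
  have e1 (j : ℕ) : pentagonal (2 * j) = j * (6 * j - 1) := by
    have h := two_mul_natCast_pentagonal (2 * j)
    rcases j with _ | j
    · simp [pentagonal_def]
    · zify [show 1 ≤ 6 * (j + 1) by lia]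
      push_cast at h ⊢
      linarith
  have e2 (j : ℕ) : pentagonal (-(2 * j + 2)) = (j + 1) * (6 * j + 7) := by
    have h := two_mul_natCast_pentagonal_neg (2 * j + 2)
    zify
    linarith
  have e3 (j : ℕ) : pentagonal (2 * j + 1) = (2 * j + 1) * (3 * j + 1) := by
    have h := two_mul_natCast_pentagonal (2 * j + 1)
    zify
    linarith
  have e4 (j : ℕ) : pentagonal (-(2 * j + 1)) = (2 * j + 1) * (3 * j + 2) := by
    have h := two_mul_natCast_pentagonal_neg (2 * j + 1)
    zify
    linarith
  induction K with
  | zero => simp [pentagonalPoly, evenTerms, oddTerms]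
  | succ K ih =>
    rw [pentagonalPoly, Finset.sum_range_succ, eval_add, ← pentagonalPoly, ih, evenTerms, oddTerms]
    simp only [eval_sub, eval_add, eval_pow, eval_X, e1, e2, e3, e4]
    push_cast
    ring

theorem coeff_pentagonalPoly {i : ℕ} (hi : i < 4124) :
    (pentagonalPoly 27).coeff i = (PowerSeries.pentagonalSeries ℤ).coeff i := by
  simp only [pentagonalPoly, finsetSum_coeff, coeff_sub, coeff_add, coeff_X_pow]
  by_cases hr : i ∈ Set.range pentagonal
  · obtain ⟨k, rfl⟩ := hr
    rw [PowerSeries.coeff_pentagonalSeries_pentagonal]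
    simp only [pentagonal_inj]
    have hk := two_mul_natCast_pentagonal k
    have hk2 : k * (3 * k - 1) < 8248 := by
      rw [← hk]
      exact_mod_cast (by lia : 2 * pentagonal k < 8248)
    have hk3 : -53 ≤ k := by nlinarith
    have hk4 : k ≤ 53 := by nlinarith
    have hall : ∀ k ∈ Finset.Icc (-53 : ℤ) 53, ∑ j ∈ Finset.range 27,
        ((((if k = 2 * (j : ℤ) then 1 else 0) + if k = -(2 * (j : ℤ) + 2) then 1 else 0) -
          if k = 2 * (j : ℤ) + 1 then 1 else 0) - if k = -(2 * (j : ℤ) + 1) then 1 else 0) =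
        ((k.negOnePow : ℤˣ) : ℤ) := by
      decide +kernel
    exact_mod_cast hall k (Finset.mem_Icc.mpr ⟨hk3, hk4⟩)
  · rw [PowerSeries.coeff_pentagonalSeries_eq_zero _ hr]
    refine Finset.sum_eq_zero fun j _ => ?_
    have hne (k : ℤ) : i ≠ pentagonal k := fun h => hr ⟨k, h.symm⟩
    simp [hne]

theorem card_lt_base {n : ℕ} (hn : n ≤ 4123) : Fintype.card (Nat.Partition n) < base := by
  have h := p_mul_exp_le (x := 1 / 50) (by norm_num) n
  have hm := moment_zero_le (x := 1 / 50) (by norm_num)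
  have hpi : π ^ 2 ≤ 9.87 := by nlinarith [pi_lt_d4, pi_pos]
  have hn' : (n : ℝ) ≤ 4123 := by exact_mod_cast hn
  have hp : p n ≤ exp (moment 0 (1 / 50) + n / 50) := by
    rw [exp_add, ← div_le_iff₀ (exp_pos _), div_eq_mul_inv, ← exp_neg]
    convert! h using 2
    rw [← exp_nat_mul]
    ring_nf
  have hlt : exp (moment 0 (1 / 50) + n / 50) < (2 : ℝ) ^ 240 := by
    rw [← log_lt_log_iff (exp_pos _) (by positivity), log_exp, log_pow]
    have := log_two_gt_d9
    norm_num at hm ⊢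
    linarith
  have : p n < ((base : ℕ) : ℝ) := by
    rw [base]; push_cast; linarith
  rw [p] at this
  exact_mod_cast this

/-- The packed values of the partition function. -/
def packedCard (N : ℕ) : ℕ :=
  ∑ i ∈ Finset.range N, Fintype.card (Nat.Partition i) * base ^ i

theorem packedCard_modEq {N : ℕ} (hN : N ≤ 4124) :
    ((base : ℤ) ^ N) ∣ (packedCard N : ℤ) * ((evenTerms 27 : ℤ) - oddTerms 27) - 1 := by
  set C : PowerSeries ℤ := PowerSeries.mk fun n => (Fintype.card (Nat.Partition n) : ℤ) with hC
  have hdvd : (X : ℤ[X]) ^ N ∣ PowerSeries.trunc N C * pentagonalPoly 27 - 1 := by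
    rw [X_pow_dvd_iff]
    intro d hd
    rw [coeff_sub, coeff_mul]
    have h := congrArg (PowerSeries.coeff d) mk_card_mul_pentagonalSeries
    rw [PowerSeries.coeff_mul] at h
    rw [sub_eq_zero]
    have hone : (1 : ℤ[X]).coeff d = PowerSeries.coeff d (1 : PowerSeries ℤ) := by
      rw [PowerSeries.coeff_one, coeff_one]
    rw [hone, ← h]
    refine Finset.sum_congr rfl fun ij hij => ?_
    have hs := Finset.HasAntidiagonal.mem_antidiagonal.mp hij
    rw [PowerSeries.coeff_trunc, if_pos (by lia), coeff_pentagonalPoly (by lia)]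
  have hval : (PowerSeries.trunc N C).eval (base : ℤ) = packedCard N := by
    rw [packedCard, PowerSeries.trunc_apply, eval_finsetSum, Finset.range_eq_Ico]
    push_cast
    refine Finset.sum_congr rfl fun i _ => ?_
    rw [eval_monomial, hC, PowerSeries.coeff_mk]
  have h := eval_dvd (x := (base : ℤ)) hdvd
  rwa [eval_sub, eval_mul, eval_pentagonalPoly, eval_pow, eval_X, eval_one, hval] at h

theorem packedCard_lt {N : ℕ} (hN : N ≤ 4124) : packedCard N < base ^ N := by
  induction N with
  | zero => simp [packedCard]
  | succ N ih =>
    have h := ih (by lia)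
    have hc := card_lt_base (n := N) (by lia)
    rw [packedCard, Finset.sum_range_succ, ← packedCard]
    calc packedCard N + Fintype.card (Nat.Partition N) * base ^ N
        < base ^ N + Fintype.card (Nat.Partition N) * base ^ N := by lia
      _ = (Fintype.card (Nat.Partition N) + 1) * base ^ N := by ring
      _ ≤ base * base ^ N := Nat.mul_le_mul_right _ hc
      _ = base ^ (N + 1) := by ring

theorem packed_eq : packed = packedCard 4124 := by
  have h1 : ((base : ℤ) ^ 4124) ∣ (packed : ℤ) * ((evenTerms 27 : ℤ) - oddTerms 27) - 1 := by
    have h := (Nat.modEq_iff_dvd.mp (show (1 + packed * oddTerms 27) ≡ packed * evenTerms 27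
      [MOD base ^ 4124] from packed_mul_evenTerms.symm))
    push_cast at h
    convert h using 1
    ring
  have h2 := packedCard_modEq (N := 4124) le_rfl
  have h3 : ((base : ℤ) ^ 4124) ∣ (packedCard 4124 : ℤ) - packed := by
    have h4 := (h1.mul_left (packedCard 4124 : ℤ)).sub (h2.mul_left (packed : ℤ))
    obtain ⟨c, hc⟩ := h4
    exact ⟨-c, by linear_combination -hc⟩
  have h5 : packed ≡ packedCard 4124 [MOD base ^ 4124] := by
    rw [Nat.modEq_iff_dvd]
    exact_mod_cast h3
  refine h5.eq_of_lt_of_lt ?_ (packedCard_lt le_rfl)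
  rw [packed]
  exact Nat.mod_lt _ (pow_pos base_pos _)

theorem packedCard_digit {N n : ℕ} (hN : N ≤ 4124) (hn : n < N) :
    packedCard N / base ^ n % base = Fintype.card (Nat.Partition n) := by
  have hb := base_pos
  induction N with
  | zero => lia
  | succ N ih =>
    rw [packedCard, Finset.sum_range_succ, ← packedCard]
    rcases Nat.lt_succ_iff_lt_or_eq.mp hn with h | rfl
    · obtain ⟨d, rfl⟩ : ∃ d, N = n + 1 + d := ⟨N - (n + 1), by lia⟩
      have : Fintype.card (Nat.Partition (n + 1 + d)) * base ^ (n + 1 + d) =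
          (Fintype.card (Nat.Partition (n + 1 + d)) * base ^ d * base) * base ^ n := by ring
      rw [this, Nat.add_mul_div_right _ _ (Nat.pow_pos hb), Nat.add_mul_mod_self_right]
      exact ih (by lia) h
    · rw [Nat.add_mul_div_right _ _ (Nat.pow_pos hb), Nat.div_eq_of_lt (packedCard_lt (by lia)),
        zero_add, Nat.mod_eq_of_lt (card_lt_base (by lia))]

theorem packed_digit {n : ℕ} (hn : n ≤ 4123) :
    packed / base ^ n % base = Fintype.card (Nat.Partition n) := by
  rw [packed_eq, packedCard_digit le_rfl (by lia)]

/-- The test at `n`, where the lowest digits of `y` are the values at `n - 1`, `n` and `n + 1`. -/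
def test (n y : ℕ) : Bool :=
  let a := y % base
  let b := y / base % base
  let c := y / base ^ 2 % base
  cond (Nat.ble 47 n)
    (Nat.ble (500 * (n ^ 2 * b ^ 2 + n * c * c))
      (500 * (n ^ 2 * (a * c) + n * a * c) + 693 * (Nat.log2 b * (a * c))))
    (Nat.ble (b ^ (2 * (n ^ 2 - 1))) (a ^ (n * (n + 1)) * c ^ (n * (n - 1))))

/-- The test at the `2 ^ d` integers starting with `n`. -/
def testRange : ℕ → ℕ → ℕ → Bool
  | 0, n, y => test n y
  | d + 1, n, y =>
    cond (testRange d n (y % base ^ (2 ^ d + 2))) (testRange d (n + 2 ^ d) (y / base ^ (2 ^ d)))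
      false

set_option maxRecDepth 100000 in
theorem testRange_packed : testRange 12 27 (packed / base ^ 26) = true := by
  decide +kernel

theorem mod_pow_div_pow_mod {b y k l : ℕ} (h : k < l) :
    y % b ^ l / b ^ k % b = y / b ^ k % b := by
  obtain ⟨m, rfl⟩ : ∃ m, l = k + (1 + m) := ⟨l - k - 1, by lia⟩
  rw [pow_add, Nat.mod_mul_right_div_self, pow_add, pow_one, Nat.mod_mul_right_mod]

theorem test_congr {n y z : ℕ} (h : ∀ k < 3, y / base ^ k % base = z / base ^ k % base) :
    test n y = test n z := by
  have h0 := h 0 (by norm_num)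
  have h1 := h 1 (by norm_num)
  have h2 := h 2 (by norm_num)
  simp only [pow_zero, Nat.div_one, pow_one] at h0 h1
  simp only [test, h0, h1, h2]

theorem test_of_testRange {d n y : ℕ} (h : testRange d n y = true) :
    ∀ k < 2 ^ d, test (n + k) (y / base ^ k) = true := by
  induction d generalizing n y with
  | zero =>
    intro k hk
    obtain rfl : k = 0 := by simpa using hk
    simpa [testRange] using h
  | succ d ih =>
    intro k hk
    rw [testRange, Bool.cond_false_right, Bool.and_eq_true] at h
    rcases lt_or_ge k (2 ^ d) with hkd | hkd
    · rw [← ih h.1 k hkd]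
      refine test_congr fun l hl => ?_
      rw [Nat.div_div_eq_div_mul, Nat.div_div_eq_div_mul, ← pow_add, mod_pow_div_pow_mod (by lia)]
    · have := ih h.2 (k - 2 ^ d) (by rw [pow_succ] at hk; lia)
      rwa [Nat.div_div_eq_div_mul, ← pow_add, Nat.add_assoc, Nat.add_sub_cancel' hkd] at this

theorem rootLogConvexAt_of_le {n : ℕ} (hn : 27 ≤ n) (hn' : n ≤ 4122) : RootLogConvexAt n := by
  have h := test_of_testRange testRange_packed (n - 27) (by norm_num; lia)
  have e : 26 + (n - 27) = n - 1 := by lia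
  have d (k l : ℕ) (hl : l ≤ 4123) (hk : n - 1 + k = l) :
      packed / base ^ (n - 1) / base ^ k % base = Fintype.card (Nat.Partition l) := by
    rw [Nat.div_div_eq_div_mul, ← pow_add, hk, packed_digit hl]
  have d0 := d 0 (n - 1) (by lia) rfl
  have d1 := d 1 n (by lia) (by lia)
  have d2 := d 2 (n + 1) (by lia) (by lia)
  rw [pow_zero, Nat.div_one] at d0
  rw [pow_one] at d1
  rw [Nat.div_div_eq_div_mul, ← pow_add, e, Nat.add_sub_cancel' hn, test] at h
  simp only [d0, d1, d2] at h
  by_cases h47 : 47 ≤ n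
  · rw [Nat.ble_eq_true_of_le h47, cond_true] at h
    exact rootLogConvexAt_of_rational_le rfl rfl rfl (Nat.le_of_ble_eq_true h)
  · have : Nat.ble 47 n = false := by
      rw [Bool.eq_false_iff]
      exact fun hb => h47 (Nat.le_of_ble_eq_true hb)
    rw [this, cond_false] at h
    exact rootLogConvexAt_of_pow_le (by lia) (Nat.le_of_ble_eq_true h)

end PackedPartitions

section Fourier

open Complex (I)
open MeasureTheory

variable {x : ℝ}

theorem continuous_decay (hx : 0 < x) : Continuous (decay x) := by
  refine continuous_tsum (fun ij => by fun_prop) ((summable_weight hx).mul_right 2) fun ij θ => ?_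
  rw [norm_mul, Real.norm_of_nonneg (weight_nonneg x ij), Real.norm_eq_abs]
  refine mul_le_mul_of_nonneg_left ?_ (weight_nonneg x ij)
  rw [abs_le]
  constructor <;> linarith [cos_le_one (area ij * θ), neg_one_le_cos (area ij * θ)]

theorem continuous_phase (hx : 0 < x) : Continuous (phase x) := by
  have h : phase x = fun θ => moment 1 x * θ - ∑' ij, weight x ij * sin (area ij * θ) := by
    ext θ
    rw [moment, phase, ← tsum_mul_right, ← ((summable_weight_mul_pow 1 hx).mul_right θ).tsum_sub
      (summable_weight_mul_sin hx θ)]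
    refine tsum_congr fun ij => ?_
    ring
  rw [h]
  refine (continuous_const.mul continuous_id).sub
    (continuous_tsum (fun ij => by fun_prop) (summable_weight hx) fun ij θ => ?_)
  rw [norm_mul, Real.norm_of_nonneg (weight_nonneg x ij)]
  exact mul_le_of_le_one_right (weight_nonneg x ij) (abs_sin_le_one _)

theorem hasSum_p_mul_cos (hx : 0 < x) (c θ : ℝ) :
    HasSum (fun m : ℕ => p m * exp (-x) ^ m * cos ((m - c) * θ))
      (exp (moment 0 x) * (exp (-decay x θ) * cos ((moment 1 x - c) * θ - phase x θ))) := by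
  have h := (hasSum_p_mul_pow (norm_exp_neg_mul hx θ)).mul_right (Complex.exp ((-c * θ : ℝ) * I))
  rw [lambert_eq hx θ, ← Complex.exp_add] at h
  have hre := Complex.hasSum_re h
  convert! hre using 1
  · ext m
    have : ((p m : ℂ) * (((exp (-x) : ℝ) : ℂ) * Complex.exp (θ * I)) ^ m *
        Complex.exp ((-c * θ : ℝ) * I)) =
        ((p m * exp (-x) ^ m : ℝ) : ℂ) * Complex.exp (((m - c) * θ : ℝ) * I) := by
      rw [mul_pow, ← Complex.exp_nat_mul, mul_assoc, mul_assoc, ← Complex.exp_add]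
      push_cast
      ring_nf
    rw [this, Complex.re_ofReal_mul, Complex.exp_ofReal_mul_I_re]
  · have : ((moment 0 x - decay x θ : ℝ) : ℂ) + ((moment 1 x * θ - phase x θ : ℝ) : ℂ) * I +
        ((-c * θ : ℝ) : ℂ) * I = ((moment 0 x - decay x θ : ℝ) : ℂ) +
        (((moment 1 x - c) * θ - phase x θ : ℝ) : ℂ) * I := by
      push_cast
      ring
    rw [this, Complex.exp_add, ← Complex.ofReal_exp, Complex.re_ofReal_mul,
      Complex.exp_ofReal_mul_I_re, sub_eq_add_neg (moment 0 x) (decay x θ), Real.exp_add, mul_assoc]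

theorem integral_cos_int_mul (k : ℤ) :
    ∫ θ in -π..π, cos (k * θ) = if k = 0 then 2 * π else 0 := by
  split_ifs with hk
  · simp [hk]
    ring
  · have hk' : (k : ℝ) ≠ 0 := by exact_mod_cast hk
    rw [intervalIntegral.integral_comp_mul_left (fun t => cos t) hk', integral_cos]
    have : (k : ℝ) * -π = -(k * π) := by ring
    rw [this, sin_neg, sin_int_mul_pi]
    simp

/-- Cauchy's formula for the partition function. -/
theorem integral_decay_cos (hx : 0 < x) (N : ℕ) :
    ∫ θ in -π..π, exp (-decay x θ) * cos ((moment 1 x - N) * θ - phase x θ) =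
      2 * π * (p N * exp (-x) ^ N) * exp (-moment 0 x) := by
  have hs := summable_p_mul_pow (exp_pos (-x)).le (exp_neg_lt_one hx)
  have h := intervalIntegral.hasSum_integral_of_dominated_convergence (μ := volume)
    (a := -π) (b := π)
    (F := fun (m : ℕ) θ => p m * exp (-x) ^ m * cos ((m - (N : ℝ)) * θ))
    (f := fun θ => exp (moment 0 x) *
      (exp (-decay x θ) * cos ((moment 1 x - N) * θ - phase x θ)))
    (fun m _ => p m * exp (-x) ^ m)
    (fun m => (by fun_prop : Continuous _).aestronglyMeasurable)
    (fun m => Filter.Eventually.of_forall fun θ _ => ?_)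
    (Filter.Eventually.of_forall fun θ _ => hs)
    intervalIntegrable_const
    (Filter.Eventually.of_forall fun θ _ => hasSum_p_mul_cos hx N θ)
  · have hterm (m : ℕ) : ∫ θ in -π..π, p m * exp (-x) ^ m * cos ((m - (N : ℝ)) * θ) =
        if m = N then 2 * π * (p N * exp (-x) ^ N) else 0 := by
      rw [intervalIntegral.integral_const_mul]
      have hc := integral_cos_int_mul ((m : ℤ) - N)
      push_cast at hc
      rw [hc]
      by_cases hm : m = N
      · simp [hm]
        ring
      · have : (m : ℤ) - N ≠ 0 := by lia
        simp [hm, this]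
    simp only [hterm] at h
    have h2 := h.unique (hasSum_ite_eq N (2 * π * (p N * exp (-x) ^ N)))
    rw [intervalIntegral.integral_const_mul] at h2
    rw [← h2, mul_right_comm, ← exp_add]
    simp
  · rw [norm_mul, Real.norm_of_nonneg (mul_nonneg (p_nonneg m) (by positivity))]
    exact mul_le_of_le_one_right (mul_nonneg (p_nonneg m) (by positivity)) (abs_cos_le_one _)

end Fourier

section GaussianMoments

open MeasureTheory

variable {b : ℝ}

theorem integrable_pow_mul_gaussian (k : ℕ) (hb : 0 < b) :
    Integrable fun θ : ℝ => θ ^ k * exp (-b * θ ^ 2) := by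
  simpa using integrable_rpow_mul_exp_neg_mul_sq hb (s := (k : ℝ))
    (by linarith [Nat.cast_nonneg (α := ℝ) k])

theorem integral_even_pow_mul_gaussian (k : ℕ) (hb : 0 < b) :
    ∫ θ : ℝ, θ ^ (2 * k) * exp (-b * θ ^ 2) =
      ((2 * k - 1).doubleFactorial : ℝ) / 2 ^ k * √π / (b ^ k * √b) := by
  have h1 : ∫ θ : ℝ, θ ^ (2 * k) * exp (-b * θ ^ 2) =
      2 * ∫ θ in Set.Ioi (0 : ℝ), θ ^ (2 * k) * exp (-b * θ ^ 2) := by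
    rw [← integral_comp_abs (f := fun θ => θ ^ (2 * k) * exp (-b * θ ^ 2))]
    simp [pow_mul]
  have h2 := integral_rpow_mul_exp_neg_mul_rpow (p := 2) (q := (2 * k : ℕ)) (b := b) two_pos
    (by linarith [Nat.cast_nonneg (α := ℝ) (2 * k)]) hb
  simp only [rpow_natCast, rpow_two] at h2
  rw [h1, h2]
  have h3 : (((2 * k : ℕ) : ℝ) + 1) / 2 = k + 1 / 2 := by push_cast; ring
  have h4 : -(((2 * k : ℕ) : ℝ) + 1) / 2 = -((k : ℝ) + 1 / 2) := by push_cast; ring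
  rw [h3, h4, Real.Gamma_nat_add_half, rpow_neg hb.le, rpow_add hb, rpow_natCast, sqrt_eq_rpow b]
  field_simp

theorem intervalIntegral_even_pow_mul_gaussian_le (k : ℕ) (hb : 0 < b) :
    ∫ θ in -π..π, θ ^ (2 * k) * exp (-b * θ ^ 2) ≤
      ((2 * k - 1).doubleFactorial : ℝ) / 2 ^ k * √π / (b ^ k * √b) := by
  rw [← integral_even_pow_mul_gaussian k hb,
    intervalIntegral.integral_of_le (by linarith [pi_pos])]
  refine setIntegral_le_integral (integrable_pow_mul_gaussian _ hb)
    (Filter.Eventually.of_forall fun θ => ?_)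
  simp only [Pi.zero_apply, pow_mul]
  positivity

theorem le_intervalIntegral_gaussian (hb : 0 < b) :
    √π / √b - √π / (2 * π ^ 2 * b * √b) ≤ ∫ θ in -π..π, exp (-b * θ ^ 2) := by
  have h0 := integral_even_pow_mul_gaussian 0 hb
  have h2 := integral_even_pow_mul_gaussian 1 hb
  have i0 := integrable_pow_mul_gaussian 0 hb
  have i2 := integrable_pow_mul_gaussian 2 hb
  simp only [mul_zero, pow_zero, one_mul, mul_one] at h0 h2 i0
  have hsub : ∫ θ : ℝ, (exp (-b * θ ^ 2) - 1 / π ^ 2 * (θ ^ 2 * exp (-b * θ ^ 2))) =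
      √π / √b - √π / (2 * π ^ 2 * b * √b) := by
    rw [integral_sub i0 (i2.const_mul _), integral_const_mul, h0, h2]
    have := sqrt_pos.mpr hb
    simp
    field_simp
  rw [← hsub, intervalIntegral.integral_of_le (by linarith [pi_pos]),
    ← integral_indicator measurableSet_Ioc]
  refine integral_mono (i0.sub (i2.const_mul _)) (i0.indicator measurableSet_Ioc) fun θ => ?_
  have he := exp_pos (-b * θ ^ 2)
  by_cases hθ : θ ∈ Set.Ioc (-π) π
  · simp only [Set.indicator_of_mem hθ]
    have : 0 ≤ 1 / π ^ 2 * (θ ^ 2 * exp (-b * θ ^ 2)) := by positivity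
    linarith
  · simp only [Set.indicator_of_notMem hθ]
    have hpi := pi_pos
    have hsq : π ^ 2 ≤ θ ^ 2 := by
      rw [Set.mem_Ioc, not_and_or, not_lt, not_le] at hθ
      rcases hθ with h | h <;> nlinarith
    have h1 : 1 ≤ 1 / π ^ 2 * θ ^ 2 := by
      rw [one_div_mul_eq_div, le_div_iff₀ (by positivity)]
      linarith
    have := mul_le_mul_of_nonneg_right h1 he.le
    linarith

end GaussianMoments

section Pointwise

theorem spread_le {y : ℝ} (hy : 0 ≤ y) (hy' : y ≤ 2 / 25) : spread y ≤ 627 / 625 * y ^ 2 := by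
  have h := cosh_le_exp_half_sq y
  have hs : y ^ 2 ≤ 4 / 625 := by nlinarith
  have h' := (abs_le.mp (abs_exp_sub_one_sub_id_le (x := y ^ 2 / 2)
    (by rw [abs_le]; constructor <;> nlinarith))).2
  rw [spread]
  nlinarith [sq_nonneg y]

theorem le_one_sub_cos {v : ℝ} (hv : |v| ≤ 6 / 25) : 497 / 1000 * v ^ 2 ≤ 1 - cos v := by
  have h := (abs_le.mp (cos_bound (hv.trans (by norm_num)))).2
  have hs : v ^ 2 ≤ 36 / 625 := by nlinarith [sq_abs v, abs_nonneg v]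
  have h4 : |v| ^ 4 = v ^ 2 * v ^ 2 := by rw [← sq_abs]; ring
  rw [h4] at h
  nlinarith [sq_nonneg v]

theorem le_fiber_decay {y v : ℝ} (hy : 0 < y) (hy' : y ≤ 2 / 25) (hv : |v| ≤ 6 / 25) :
    99 / 100 * (1 / y) * (v ^ 2 / (y ^ 2 + v ^ 2)) ≤
      2 / y * (1 - cos v) / (spread y + 2 * (1 - cos v)) := by
  have hs := spread_le hy.le hy'
  have hs0 := spread_pos hy
  have hc := le_one_sub_cos hv
  have hc0 : 0 ≤ 1 - cos v := by linarith [cos_le_one v]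
  have key : 99 / 100 * v ^ 2 * (spread y + 2 * (1 - cos v)) ≤
      2 * (1 - cos v) * (y ^ 2 + v ^ 2) := by
    have h1 := mul_le_mul_of_nonneg_left hs (sq_nonneg v)
    have h2 := mul_le_mul_of_nonneg_left hc (sq_nonneg y)
    have h3 := mul_nonneg hc0 (sq_nonneg v)
    nlinarith [mul_nonneg (sq_nonneg y) (sq_nonneg v)]
  have e1 : 99 / 100 * (1 / y) * (v ^ 2 / (y ^ 2 + v ^ 2)) =
      1 / y * (99 / 100 * v ^ 2 / (y ^ 2 + v ^ 2)) := by ring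
  have e2 : 2 / y * (1 - cos v) / (spread y + 2 * (1 - cos v)) =
      1 / y * (2 * (1 - cos v) / (spread y + 2 * (1 - cos v))) := by ring
  rw [e1, e2]
  refine mul_le_mul_of_nonneg_left ?_ (by positivity)
  rw [div_le_div_iff₀ (by positivity) (by positivity)]
  exact key

variable {T θ : ℝ}

theorem le_decay_of_abs_le (hT : 50 ≤ T) (hθ : |θ| * T ≤ 3) :
    7 / 5 * T * ((θ * T) ^ 2 / (1 + (θ * T) ^ 2)) ≤ decay T⁻¹ θ := by
  have hT0 : 0 < T := by linarith
  have hx : 0 < T⁻¹ := by positivity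
  have hx' : T⁻¹ ≤ 1 / 50 := by
    rw [inv_le_comm₀ hT0 (by norm_num)]
    linarith
  have hθ' : |θ| ≤ 3 / 50 := by nlinarith [abs_nonneg θ]
  have hq : 0 ≤ (θ * T) ^ 2 / (1 + (θ * T) ^ 2) := by positivity
  have hterm (m : ℝ) (hm : 0 < m) (hm' : m ≤ 4) :
      99 / 100 * T * ((θ * T) ^ 2 / (1 + (θ * T) ^ 2)) / m ^ 2 ≤
        2 / (m * T⁻¹) * (1 - cos (m * θ)) / (spread (m * T⁻¹) + 2 * (1 - cos (m * θ))) / m := by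
    have h := le_fiber_decay (y := m * T⁻¹) (v := m * θ) (by positivity) (by nlinarith)
      (by rw [abs_mul, abs_of_pos hm]; nlinarith [abs_nonneg θ])
    refine le_of_eq_of_le ?_ (div_le_div_of_nonneg_right h hm.le)
    have : 0 < 1 + (θ * T) ^ 2 := by positivity
    have : 0 < (m * T⁻¹) ^ 2 + (m * θ) ^ 2 := by positivity
    field_simp
  refine le_trans ?_ (sum_le_decay hx θ 4)
  simp only [Finset.sum_range_succ, Finset.sum_range_zero]
  have h1 := hterm 1 (by norm_num) (by norm_num)
  have h2 := hterm 2 (by norm_num) (by norm_num)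
  have h3 := hterm 3 (by norm_num) (by norm_num)
  have h4 := hterm 4 (by norm_num) (by norm_num)
  norm_num only [Nat.cast_zero, Nat.cast_one, Nat.cast_ofNat, zero_add] at h1 h2 h3 h4 ⊢
  have := mul_nonneg hT0.le hq
  linarith

theorem le_decay_center (hT : 50 ≤ T) (hθ : |θ| * T ≤ 3 / 5) : T ^ 3 * θ ^ 2 ≤ decay T⁻¹ θ := by
  refine le_trans ?_ (le_decay_of_abs_le hT (hθ.trans (by norm_num)))
  have hs : (θ * T) ^ 2 ≤ 9 / 25 := by
    rw [mul_pow, ← sq_abs, ← mul_pow]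
    nlinarith [mul_nonneg (abs_nonneg θ) (by linarith : 0 ≤ T)]
  rw [← mul_div_assoc, le_div_iff₀ (by positivity)]
  nlinarith [mul_nonneg (by linarith : 0 ≤ T) (sq_nonneg (θ * T))]

theorem le_decay_middle (hT : 50 ≤ T) (h : 3 / 5 ≤ |θ| * T) (h' : |θ| * T ≤ 3) :
    9 / 25 * T ≤ decay T⁻¹ θ := by
  refine le_trans ?_ (le_decay_of_abs_le hT h')
  have hs : 9 / 25 ≤ (θ * T) ^ 2 := by
    rw [mul_pow, ← sq_abs, ← mul_pow]
    nlinarith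
  rw [← mul_div_assoc, le_div_iff₀ (by positivity)]
  nlinarith

theorem le_decay_far (hT : 50 ≤ T) (h : 3 ≤ |θ| * T) (h' : |θ| ≤ π) :
    7 / 10 * T ≤ decay T⁻¹ θ := by
  have hT0 : 0 < T := by linarith
  have hx : 0 < T⁻¹ := by positivity
  have hx' : T⁻¹ ≤ 1 / 50 := by
    rw [inv_le_comm₀ hT0 (by norm_num)]
    linarith
  refine le_trans ?_ (sum_le_decay hx θ 1)
  simp only [Finset.sum_range_one, Nat.cast_zero, zero_add, one_mul, div_one]
  have hs := spread_le hx.le (hx'.trans (by norm_num))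
  have hs0 := spread_pos hx
  have hc := cos_le_one_sub_mul_cos_sq h'
  have hθ : 9 * T⁻¹ ^ 2 ≤ θ ^ 2 := by
    have : 3 * T⁻¹ ≤ |θ| := by
      rw [← div_eq_mul_inv, div_le_iff₀ hT0]
      exact h
    rw [← sq_abs θ]
    nlinarith
  have hπ : 1 / 5 ≤ 2 / π ^ 2 := by
    rw [div_le_div_iff₀ (by norm_num) (by positivity)]
    nlinarith [pi_lt_d2, pi_pos]
  have hc' : 1 / 5 * θ ^ 2 ≤ 1 - cos θ := by nlinarith [sq_nonneg θ]
  have hx2 : 0 < T⁻¹ ^ 2 := by positivity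
  rw [le_div_iff₀ (by nlinarith), show 2 / T⁻¹ * (1 - cos θ) = T * (2 * (1 - cos θ)) by
    field_simp]
  nlinarith

theorem exp_neg_decay_le (hT : 50 ≤ T) (hθ : |θ| ≤ π) :
    exp (-decay T⁻¹ θ) ≤ exp (-T ^ 3 * θ ^ 2) +
      exp (1 - 9 / 25 * T) * exp (-(T ^ 2 / 9) * θ ^ 2) + exp (-(7 / 10 * T)) := by
  have h1 := exp_pos (-T ^ 3 * θ ^ 2)
  have h2 : 0 < exp (1 - 9 / 25 * T) * exp (-(T ^ 2 / 9) * θ ^ 2) := by positivity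
  have h3 := exp_pos (-(7 / 10 * T))
  rcases le_total (|θ| * T) (3 / 5) with h | h
  · have := exp_le_exp.mpr (neg_le_neg (le_decay_center hT h))
    rw [← neg_mul] at this
    linarith
  rcases le_total (|θ| * T) 3 with h' | h'
  · have hd := le_decay_middle hT h h'
    have hs : T ^ 2 * θ ^ 2 ≤ 9 := by
      rw [← sq_abs θ, ← mul_pow]
      nlinarith
    have : exp (-decay T⁻¹ θ) ≤ exp (1 - 9 / 25 * T) * exp (-(T ^ 2 / 9) * θ ^ 2) := by
      rw [← Real.exp_add, exp_le_exp]
      linarith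
    linarith
  · have := exp_le_exp.mpr (neg_le_neg (le_decay_far hT h' hθ))
    linarith

theorem decay_le_mul_sq (hT : 0 < T) : decay T⁻¹ θ ≤ 33 / 20 * T ^ 3 * θ ^ 2 := by
  have hx : 0 < T⁻¹ := by positivity
  have h := moment_two_le hx
  have hπ : π ^ 2 / 6 ≤ 33 / 20 := by nlinarith [pi_lt_d4, pi_pos]
  have h' : moment 2 T⁻¹ ≤ 2 * T ^ 3 * (33 / 20) := by
    refine h.trans ?_
    rw [inv_pow, div_inv_eq_mul]
    gcongr
  refine (decay_le hx θ).trans ?_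
  nlinarith [sq_nonneg θ]

theorem abs_phase_le_mul_pow (hT : 0 < T) : |phase T⁻¹ θ| ≤ 9 / 5 * T ^ 4 * |θ| ^ 3 := by
  have hx : 0 < T⁻¹ := by positivity
  have hπ : π ^ 2 / 6 ≤ 33 / 20 := by nlinarith [pi_lt_d4, pi_pos]
  have h' : moment 3 T⁻¹ ≤ 13 / 2 * T ^ 4 * (33 / 20) := by
    refine (moment_three_le hx).trans ?_
    rw [inv_pow, div_inv_eq_mul]
    gcongr
  refine (abs_phase_le hx θ).trans ?_
  have : 0 ≤ |θ| ^ 3 := by positivity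
  have : 0 ≤ T ^ 4 * |θ| ^ 3 := by positivity
  nlinarith

theorem exp_neg_middle_le (hT : 50 ≤ T) : exp (1 - 9 / 25 * T) ≤ 14 / T ^ 5 := by
  have hT0 : 0 < T := by linarith
  have h1 : T / 50 ≤ exp (T / 50 - 1) := by linarith [add_one_le_exp (T / 50 - 1)]
  have h5 := pow_le_pow_left₀ (by positivity) h1 5
  rw [← Real.exp_nat_mul] at h5
  have h17 : (2.718 : ℝ) ^ 17 ≤ exp 17 := by
    have := pow_le_pow_left₀ (by norm_num) (by linarith [exp_one_gt_d9] : (2.718 : ℝ) ≤ exp 1) 17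
    rwa [← Real.exp_nat_mul, mul_one] at this
  have hle : exp (1 - 9 / 25 * T) * exp ((5 : ℕ) * (T / 50 - 1)) * exp 17 ≤ 1 := by
    rw [← Real.exp_add, ← Real.exp_add, exp_le_one_iff]
    push_cast
    linarith
  rw [le_div_iff₀ (by positivity)]
  have e : T ^ 5 = 312500000 * (T / 50) ^ 5 := by ring
  have h0 := exp_pos (1 - 9 / 25 * T)
  have ha : exp (1 - 9 / 25 * T) * (T / 50) ^ 5 * 2.718 ^ 17 ≤ 1 := by
    refine le_trans ?_ hle
    gcongr
  rw [e]
  have : (0 : ℝ) ≤ exp (1 - 9 / 25 * T) * (T / 50) ^ 5 := by positivity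
  norm_num at ha
  linarith

theorem exp_neg_far_le (hT : 50 ≤ T) : exp (-(7 / 10 * T)) ≤ 13 / 10 / T ^ 9 := by
  have hT0 : 0 < T := by linarith
  have h1 : T / 50 ≤ exp (T / 50 - 1) := by linarith [add_one_le_exp (T / 50 - 1)]
  have h9 := pow_le_pow_left₀ (by positivity) h1 9
  rw [← Real.exp_nat_mul] at h9
  have h35 : (2.718 : ℝ) ^ 35 ≤ exp 35 := by
    have := pow_le_pow_left₀ (by norm_num) (by linarith [exp_one_gt_d9] : (2.718 : ℝ) ≤ exp 1) 35
    rwa [← Real.exp_nat_mul, mul_one] at this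
  have hle : exp (-(7 / 10 * T)) * exp ((9 : ℕ) * (T / 50 - 1)) * exp 35 ≤ 1 := by
    rw [← Real.exp_add, ← Real.exp_add, exp_le_one_iff]
    push_cast
    linarith
  rw [le_div_iff₀ (by positivity)]
  have e : T ^ 9 = 50 ^ 9 * (T / 50) ^ 9 := by ring
  have h0 := exp_pos (-(7 / 10 * T))
  have ha : exp (-(7 / 10 * T)) * (T / 50) ^ 9 * 2.718 ^ 35 ≤ 1 := by
    refine le_trans ?_ hle
    gcongr
  rw [e]
  have : (0 : ℝ) ≤ exp (-(7 / 10 * T)) * (T / 50) ^ 9 := by positivity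
  norm_num at ha ⊢
  linarith

end Pointwise

section Integrals

open MeasureTheory

/-- The absolute moment of order `2 * k` of the Gaussian weight with parameter `b`. -/
noncomputable def gaussianMoment (k : ℕ) (b : ℝ) : ℝ :=
  ((2 * k - 1).doubleFactorial : ℝ) / 2 ^ k * √π / (b ^ k * √b)

theorem integral_le_of_le_gaussian {f : ℝ → ℝ} (hf : Continuous f) {b₁ b₂ c₁ c₂ c₃ : ℝ} {k l : ℕ}
    (hb₁ : 0 < b₁) (hb₂ : 0 < b₂) (hc₁ : 0 ≤ c₁) (hc₂ : 0 ≤ c₂)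
    (h : ∀ θ, |θ| ≤ π → f θ ≤ c₁ * (θ ^ (2 * k) * exp (-b₁ * θ ^ 2)) +
      c₂ * (θ ^ (2 * l) * exp (-b₂ * θ ^ 2)) + c₃) :
    ∫ θ in -π..π, f θ ≤ c₁ * gaussianMoment k b₁ + c₂ * gaussianMoment l b₂ + 2 * π * c₃ := by
  have hpi : -π ≤ π := by linarith [pi_pos]
  have i₁ : IntervalIntegrable (fun θ => c₁ * (θ ^ (2 * k) * exp (-b₁ * θ ^ 2))) volume (-π) π :=
    (by fun_prop : Continuous _).intervalIntegrable _ _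
  have i₂ : IntervalIntegrable (fun θ => c₂ * (θ ^ (2 * l) * exp (-b₂ * θ ^ 2))) volume (-π) π :=
    (by fun_prop : Continuous _).intervalIntegrable _ _
  refine (intervalIntegral.integral_mono_on hpi (hf.intervalIntegrable _ _)
    ((i₁.add i₂).add intervalIntegrable_const) fun θ hθ => h θ (abs_le.mpr hθ)).trans ?_
  rw [intervalIntegral.integral_add (i₁.add i₂) intervalIntegrable_const,
    intervalIntegral.integral_add i₁ i₂, intervalIntegral.integral_const_mul,
    intervalIntegral.integral_const_mul, intervalIntegral.integral_const, smul_eq_mul]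
  have h₁ := mul_le_mul_of_nonneg_left (intervalIntegral_even_pow_mul_gaussian_le k hb₁) hc₁
  have h₂ := mul_le_mul_of_nonneg_left (intervalIntegral_even_pow_mul_gaussian_le l hb₂) hc₂
  rw [gaussianMoment, gaussianMoment]
  linarith

variable {r : ℝ}

theorem sqrt_sq_pow_three (hr : 0 < r) : √((r ^ 2) ^ 3) = r ^ 3 := by
  rw [← pow_mul, show 2 * 3 = 3 * 2 by norm_num, pow_mul, sqrt_sq (by positivity)]

theorem sqrt_sq_pow_two_div (hr : 0 < r) : √((r ^ 2) ^ 2 / 9) = r ^ 2 / 3 := by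
  rw [show (r ^ 2) ^ 2 / 9 = (r ^ 2 / 3) ^ 2 by ring, sqrt_sq (by positivity)]

theorem pi_le_mul_sqrt_pi : π ≤ 2 * √π := by
  have h : √π ≤ 2 := by
    rw [sqrt_le_left (by norm_num)]
    linarith [pi_le_four]
  nlinarith [sq_sqrt pi_pos.le, sqrt_nonneg π]

theorem seven_le (hr : 0 < r) (hT : 50 ≤ r ^ 2) : 7 ≤ r := by nlinarith

theorem gaussianMoment_center (hr : 0 < r) (k : ℕ) : gaussianMoment k ((r ^ 2) ^ 3) =
    ((2 * k - 1).doubleFactorial : ℝ) / 2 ^ k * √π / r ^ (6 * k + 3) := by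
  rw [gaussianMoment, sqrt_sq_pow_three hr]
  ring

theorem gaussianMoment_middle_zero (hr : 0 < r) :
    gaussianMoment 0 ((r ^ 2) ^ 2 / 9) = 3 * √π / r ^ 2 := by
  rw [gaussianMoment, sqrt_sq_pow_two_div hr]
  norm_num
  ring

theorem gaussianMoment_middle_one (hr : 0 < r) :
    gaussianMoment 1 ((r ^ 2) ^ 2 / 9) = 27 / 2 * √π / r ^ 6 := by
  rw [gaussianMoment, sqrt_sq_pow_two_div hr]
  norm_num
  ring

theorem exp_neg_middle_mul_le (hr : 0 < r) (hT : 50 ≤ r ^ 2) {c q : ℝ} (hc : 0 ≤ c) (hq : 0 ≤ q)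
    (k l m : ℕ) (hl : k + 10 = l + m) :
    exp (1 - 9 / 25 * r ^ 2) * (c * q / r ^ k) ≤ 14 * c / 7 ^ l * (q / r ^ m) := by
  have h7 := seven_le hr hT
  have h : exp (1 - 9 / 25 * r ^ 2) * (c * q / r ^ k) ≤ 14 / (r ^ 2) ^ 5 * (c * q / r ^ k) :=
    mul_le_mul_of_nonneg_right (exp_neg_middle_le hT) (by positivity)
  have e : 14 / (r ^ 2) ^ 5 * (c * q / r ^ k) = 14 * c / r ^ l * (q / r ^ m) := by
    rw [← pow_mul, div_mul_div_comm, div_mul_div_comm, ← pow_add, ← pow_add, ← hl]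
    ring
  rw [e] at h
  refine h.trans (mul_le_mul_of_nonneg_right ?_ (by positivity))
  gcongr

theorem exp_neg_far_mul_le (hr : 0 < r) (hT : 50 ≤ r ^ 2) {c : ℝ} (hc : 0 ≤ c)
    (l m : ℕ) (hl : 18 = l + m) :
    2 * π * (c * exp (-(7 / 10 * r ^ 2))) ≤ 26 / 5 * c / 7 ^ l * (√π / r ^ m) := by
  have h7 := seven_le hr hT
  have h : 2 * π * (c * exp (-(7 / 10 * r ^ 2))) ≤ 2 * (2 * √π) * (c * (13 / 10 / (r ^ 2) ^ 9)) :=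
    mul_le_mul (by linarith [pi_le_mul_sqrt_pi])
      (mul_le_mul_of_nonneg_left (exp_neg_far_le hT) hc) (by positivity) (by positivity)
  have e : 2 * (2 * √π) * (c * (13 / 10 / (r ^ 2) ^ 9)) = 26 / 5 * c / r ^ l * (√π / r ^ m) := by
    rw [← pow_mul, div_mul_div_comm, ← pow_add, ← hl]
    ring
  rw [e] at h
  refine h.trans (mul_le_mul_of_nonneg_right ?_ (by positivity))
  gcongr

theorem integral_decay_mul_sq_le (hr : 0 < r) (hT : 50 ≤ r ^ 2) :
    ∫ θ in -π..π, exp (-decay (r ^ 2)⁻¹ θ) * θ ^ 2 ≤ 501 / 1000 * √π / r ^ 9 := by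
  have hd := continuous_decay (x := (r ^ 2)⁻¹) (by positivity)
  have h := integral_le_of_le_gaussian (f := fun θ => exp (-decay (r ^ 2)⁻¹ θ) * θ ^ 2)
    (by fun_prop) (b₁ := (r ^ 2) ^ 3) (b₂ := (r ^ 2) ^ 2 / 9) (c₁ := 1)
    (c₂ := exp (1 - 9 / 25 * r ^ 2)) (c₃ := exp (-(7 / 10 * r ^ 2)) * 10) (k := 1) (l := 1)
    (by positivity) (by positivity) (by positivity) (by positivity) fun θ hθ => by
      have h10 : θ ^ 2 ≤ 10 := by
        rw [← sq_abs]
        nlinarith [pi_lt_d2, abs_nonneg θ]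
      have := mul_le_mul_of_nonneg_left h10 (exp_pos (-(7 / 10 * r ^ 2))).le
      have := mul_le_mul_of_nonneg_right (exp_neg_decay_le hT hθ) (sq_nonneg θ)
      rw [mul_one]
      linarith
  refine h.trans ?_
  have h1 := exp_neg_middle_mul_le hr hT (by norm_num : (0 : ℝ) ≤ 27 / 2) (sqrt_nonneg π) 6 7 9 rfl
  have h2 := exp_neg_far_mul_le hr hT (by norm_num : (0 : ℝ) ≤ 10) 9 9 rfl
  have h0 : 0 ≤ √π / r ^ 9 := by positivity
  rw [gaussianMoment_center hr, gaussianMoment_middle_one hr,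
    mul_comm (exp (-(7 / 10 * r ^ 2)))]
  norm_num [Nat.doubleFactorial, mul_div_assoc] at h1 h2 ⊢
  linarith

theorem abs_integral_decay_mul_sin_le (hr : 0 < r) (hT : 50 ≤ r ^ 2) :
    |∫ θ in -π..π, exp (-decay (r ^ 2)⁻¹ θ) * (sin θ * sin (phase (r ^ 2)⁻¹ θ))| ≤
      1353 / 1000 * √π / r ^ 7 := by
  have hd := continuous_decay (x := (r ^ 2)⁻¹) (by positivity)
  have hp := continuous_phase (x := (r ^ 2)⁻¹) (by positivity)
  refine (intervalIntegral.abs_integral_le_integral_abs (by linarith [pi_pos])).trans ?_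
  have h := integral_le_of_le_gaussian
    (f := fun θ => |exp (-decay (r ^ 2)⁻¹ θ) * (sin θ * sin (phase (r ^ 2)⁻¹ θ))|)
    (by fun_prop) (b₁ := (r ^ 2) ^ 3) (b₂ := (r ^ 2) ^ 2 / 9) (c₁ := 9 / 5 * (r ^ 2) ^ 4)
    (c₂ := exp (1 - 9 / 25 * r ^ 2)) (c₃ := exp (-(7 / 10 * r ^ 2))) (k := 2) (l := 0)
    (by positivity) (by positivity) (by positivity) (by positivity) fun θ hθ => by
      rw [abs_mul, abs_of_pos (exp_pos _), abs_mul]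
      set s := |sin θ| * |sin (phase (r ^ 2)⁻¹ θ)| with hs
      have hs0 : 0 ≤ s := by positivity
      have hs1 : s ≤ 1 := mul_le_one₀ (abs_sin_le_one _) (abs_nonneg _) (abs_sin_le_one _)
      have hs4 : s ≤ 9 / 5 * (r ^ 2) ^ 4 * θ ^ 4 := by
        have := mul_le_mul (abs_sin_le_abs (x := θ))
          ((abs_sin_le_abs (x := phase (r ^ 2)⁻¹ θ)).trans (abs_phase_le_mul_pow (by positivity)))
          (abs_nonneg _) (abs_nonneg _)
        refine this.trans_eq ?_
        rw [show θ ^ 4 = |θ| ^ 4 by rw [← abs_pow, abs_of_nonneg (by positivity)]]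
        ring
      have h1 := mul_le_mul_of_nonneg_left hs4 (exp_pos (-(r ^ 2) ^ 3 * θ ^ 2)).le
      have h2 := mul_le_mul_of_nonneg_left hs1
        (by positivity : 0 ≤ exp (1 - 9 / 25 * r ^ 2) * exp (-((r ^ 2) ^ 2 / 9) * θ ^ 2))
      have h3 := mul_le_mul_of_nonneg_left hs1 (exp_pos (-(7 / 10 * r ^ 2))).le
      have := mul_le_mul_of_nonneg_right (exp_neg_decay_le hT hθ) hs0
      norm_num
      norm_num at h1 h2 h3 this
      linarith
  refine h.trans ?_
  have h1 := exp_neg_middle_mul_le hr hT (by norm_num : (0 : ℝ) ≤ 3) (sqrt_nonneg π) 2 5 7 rfl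
  have h2 := exp_neg_far_mul_le hr hT (by norm_num : (0 : ℝ) ≤ 1) 11 7 rfl
  have h0 : 0 ≤ √π / r ^ 7 := by positivity
  have e : 9 / 5 * (r ^ 2) ^ 4 * (((2 * 2 - 1).doubleFactorial : ℝ) / 2 ^ 2 * √π /
      r ^ (6 * 2 + 3)) = 27 / 20 * (√π / r ^ 7) := by
    norm_num [Nat.doubleFactorial]
    field_simp
    norm_num
  rw [gaussianMoment_center hr, gaussianMoment_middle_zero hr, e]
  norm_num [mul_div_assoc] at h1 h2 ⊢
  linarith

theorem le_integral_decay_mul_cos (hr : 0 < r) (hT : 50 ≤ r ^ 2) :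
    71 / 100 * √π / r ^ 3 ≤ ∫ θ in -π..π, exp (-decay (r ^ 2)⁻¹ θ) * cos (phase (r ^ 2)⁻¹ θ) := by
  have hd := continuous_decay (x := (r ^ 2)⁻¹) (by positivity)
  have hp := continuous_phase (x := (r ^ 2)⁻¹) (by positivity)
  have h := integral_le_of_le_gaussian
    (f := fun θ => exp (-(33 / 20 * (r ^ 2) ^ 3) * θ ^ 2) -
      exp (-decay (r ^ 2)⁻¹ θ) * cos (phase (r ^ 2)⁻¹ θ))
    (by fun_prop) (b₁ := (r ^ 2) ^ 3) (b₂ := (r ^ 2) ^ 2 / 9) (c₁ := 81 / 50 * (r ^ 2) ^ 8)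
    (c₂ := 2 * exp (1 - 9 / 25 * r ^ 2)) (c₃ := 2 * exp (-(7 / 10 * r ^ 2))) (k := 3) (l := 0)
    (by positivity) (by positivity) (by positivity) (by positivity) fun θ hθ => by
      set s := 1 - cos (phase (r ^ 2)⁻¹ θ) with hs
      have hs0 : 0 ≤ s := by linarith [cos_le_one (phase (r ^ 2)⁻¹ θ)]
      have hs1 : s ≤ 2 := by linarith [neg_one_le_cos (phase (r ^ 2)⁻¹ θ)]
      have hs6 : s ≤ 81 / 50 * (r ^ 2) ^ 8 * θ ^ 6 := by
        have h1 := one_sub_sq_div_two_le_cos (x := phase (r ^ 2)⁻¹ θ)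
        have h2 := pow_le_pow_left₀ (abs_nonneg _)
          (abs_phase_le_mul_pow (T := r ^ 2) (θ := θ) (by positivity)) 2
        rw [sq_abs] at h2
        have e : (9 / 5 * (r ^ 2) ^ 4 * |θ| ^ 3) ^ 2 = 81 / 25 * (r ^ 2) ^ 8 * θ ^ 6 := by
          rw [show θ ^ 6 = |θ| ^ 6 by rw [← abs_pow, abs_of_nonneg (by positivity)]]
          ring
        linarith
      have hlow : exp (-(33 / 20 * (r ^ 2) ^ 3 * θ ^ 2)) ≤ exp (-decay (r ^ 2)⁻¹ θ) := by
        rw [exp_le_exp]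
        exact neg_le_neg (decay_le_mul_sq (by positivity))
      have h1 := mul_le_mul_of_nonneg_left hs6 (exp_pos (-(r ^ 2) ^ 3 * θ ^ 2)).le
      have h2 := mul_le_mul_of_nonneg_left hs1
        (by positivity : 0 ≤ exp (1 - 9 / 25 * r ^ 2) * exp (-((r ^ 2) ^ 2 / 9) * θ ^ 2))
      have h3 := mul_le_mul_of_nonneg_left hs1 (exp_pos (-(7 / 10 * r ^ 2))).le
      have h4 := mul_le_mul_of_nonneg_right (exp_neg_decay_le hT hθ) hs0
      have e : cos (phase (r ^ 2)⁻¹ θ) = 1 - s := by ring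
      rw [e]
      norm_num
      norm_num at h1 h2 h3 h4
      linarith
  have hg := le_intervalIntegral_gaussian (b := 33 / 20 * (r ^ 2) ^ 3) (by positivity)
  rw [intervalIntegral.integral_sub ((by fun_prop : Continuous _).intervalIntegrable _ _)
    ((by fun_prop : Continuous _).intervalIntegrable _ _)] at h
  have h1 := exp_neg_middle_mul_le hr hT (by norm_num : (0 : ℝ) ≤ 3) (sqrt_nonneg π) 2 9 3 rfl
  have h2 := exp_neg_far_mul_le hr hT (by norm_num : (0 : ℝ) ≤ 2) 15 3 rfl
  have h0 : 0 ≤ √π / r ^ 3 := by positivity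
  have e : 81 / 50 * (r ^ 2) ^ 8 * (((2 * 3 - 1).doubleFactorial : ℝ) / 2 ^ 3 * √π /
      r ^ (6 * 3 + 3)) ≤ 243 / 4000 * (√π / r ^ 3) := by
    have : 81 / 50 * (r ^ 2) ^ 8 * (((2 * 3 - 1).doubleFactorial : ℝ) / 2 ^ 3 * √π /
        r ^ (6 * 3 + 3)) = 243 / 80 / r ^ 2 * (√π / r ^ 3) := by
      norm_num [Nat.doubleFactorial]
      field_simp
      norm_num
    rw [this]
    refine mul_le_mul_of_nonneg_right ?_ h0
    rw [div_le_iff₀ (by positivity)]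
    linarith
  rw [gaussianMoment_center hr, gaussianMoment_middle_zero hr] at h
  have hroot : √(33 / 20) ≤ 1285 / 1000 := by
    rw [sqrt_le_left (by norm_num)]
    norm_num
  have hroot1 : 1 ≤ √(33 / 20) := by
    rw [one_le_sqrt]
    norm_num
  have hmain : 778 / 1000 * (√π / r ^ 3) ≤ √π / √(33 / 20 * (r ^ 2) ^ 3) := by
    rw [sqrt_mul (by norm_num), sqrt_sq_pow_three hr,
      show √π / (√(33 / 20) * r ^ 3) = 1 / √(33 / 20) * (√π / r ^ 3) by ring]
    refine mul_le_mul_of_nonneg_right ?_ h0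
    rw [le_div_iff₀ (by positivity)]
    linarith
  have htail : √π / (2 * π ^ 2 * (33 / 20 * (r ^ 2) ^ 3) * √(33 / 20 * (r ^ 2) ^ 3)) ≤
      1 / 1000 * (√π / r ^ 3) := by
    rw [sqrt_mul (by norm_num), sqrt_sq_pow_three hr,
      show √π / (2 * π ^ 2 * (33 / 20 * (r ^ 2) ^ 3) * (√(33 / 20) * r ^ 3)) =
        1 / (2 * π ^ 2 * (33 / 20 * (r ^ 2) ^ 3) * √(33 / 20)) * (√π / r ^ 3) by ring]
    refine mul_le_mul_of_nonneg_right (one_div_le_one_div_of_le (by norm_num) ?_) h0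
    have h6 : 50 ^ 3 ≤ (r ^ 2) ^ 3 := pow_le_pow_left₀ (by norm_num) hT 3
    calc (1000 : ℝ) ≤ 2 * 1 ^ 2 * (33 / 20 * 50 ^ 3) * 1 := by norm_num
      _ ≤ _ := by gcongr; linarith [pi_gt_three]
  rw [mul_div_assoc (71 / 100)]
  linarith

end Integrals

section LargeArgument

theorem log_integral_decay_cos {x : ℝ} (hx : 0 < x) (N : ℕ) :
    log (∫ θ in -π..π, exp (-decay x θ) * cos ((moment 1 x - N) * θ - phase x θ)) =
      log (2 * π) + log (p N) - N * x - moment 0 x := by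
  have hp := p_pos N
  have hpi := pi_pos
  rw [integral_decay_cos hx, log_mul (by positivity) (by positivity),
    log_mul (x := 2 * π) (by positivity) (by positivity), log_mul hp.ne' (by positivity), log_exp,
    log_pow, log_exp]
  ring

theorem two_mul_log_sub_le {a d c w : ℝ} (hc : 0 < c) (hw : w < 1) (hd : 0 < a - d)
    (hd' : 0 < a + d) (h : (1 - w) * c ^ 2 ≤ (a - d) * (a + d)) :
    2 * log c - log (a - d) - log (a + d) ≤ w / (1 - w) := by
  have h1w : 0 < 1 - w := by linarith
  have hl := log_le_log (by positivity) h
  rw [log_mul (by positivity) (by positivity), log_mul hd.ne' hd'.ne', log_pow] at hl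
  have := one_sub_inv_le_log_of_pos h1w
  have e : w / (1 - w) = (1 - w)⁻¹ - 1 := by
    field_simp
    ring
  rw [e]
  push_cast at hl
  linarith

theorem log_add_sub_log_sub_le {a d : ℝ} (hd : 0 < a - d) (hd' : 0 < a + d) :
    log (a + d) - log (a - d) ≤ 2 * d / (a - d) := by
  rw [← log_div hd'.ne' hd.ne']
  refine (log_le_sub_one_of_pos (by positivity)).trans_eq ?_
  field_simp
  ring

theorem log_sub_add_bounds {A B C u : ℝ} (hC0 : 0 < C) (hu0 : 0 < u) (hu1 : u ≤ 1 / 50)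
    (hA : (1 - 353 / 1000 * u ^ 3) * C ≤ A) (hB : |B| ≤ 953 / 500 * u ^ 2 * C) :
    2 * log C - log (A - B) - log (A + B) ≤ 39 / 50 * u ^ 3 ∧
      log (A - B) - log (A + B) ≤ 191 / 50 * u ^ 2 := by
  have hu2 : u ^ 2 ≤ 1 / 2500 := by nlinarith
  have hu20 : 0 < u ^ 2 := by positivity
  have hu30 : 0 < u ^ 3 := by positivity
  have hu3 : u ^ 3 ≤ 1 / 125000 := by nlinarith
  have hu4 : u ^ 4 ≤ 1 / 50 * u ^ 3 := by nlinarith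
  have hmin : 999 / 1000 * C ≤ A - |B| := by
    have h2 := mul_le_mul_of_nonneg_right hu2 hC0.le
    have h3 := mul_le_mul_of_nonneg_right hu3 hC0.le
    linarith
  have hp1 : 999 / 1000 * C ≤ A - B := by linarith [le_abs_self B]
  have hp2 : 999 / 1000 * C ≤ A + B := by linarith [neg_abs_le B]
  constructor
  · refine (two_mul_log_sub_le (w := 779 / 1000 * u ^ 3) hC0 (by linarith) (by linarith)
      (by linarith) ?_).trans ?_
    · have hA2 : (1 - 353 / 1000 * u ^ 3) ^ 2 * C ^ 2 ≤ A ^ 2 := by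
        rw [← mul_pow]
        exact pow_le_pow_left₀ (mul_nonneg (by linarith) hC0.le) hA 2
      have hB2 : B ^ 2 ≤ (953 / 500 * u ^ 2) ^ 2 * C ^ 2 := by
        rw [← mul_pow, ← sq_abs]
        exact pow_le_pow_left₀ (abs_nonneg _) hB 2
      have hw : 1 - 779 / 1000 * u ^ 3 ≤
          (1 - 353 / 1000 * u ^ 3) ^ 2 - (953 / 500 * u ^ 2) ^ 2 := by
        linarith [sq_nonneg (u ^ 3)]
      have := mul_le_mul_of_nonneg_right hw (sq_nonneg C)
      linarith
    · rw [div_le_iff₀ (by linarith)]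
      nlinarith
  · have := log_add_sub_log_sub_le (a := A) (d := -B) (by linarith) (by linarith)
    rw [sub_neg_eq_add, ← sub_eq_add_neg] at this
    refine this.trans ?_
    rw [div_le_iff₀ (by linarith)]
    have := mul_le_mul_of_nonneg_left hp2 (by positivity : 0 ≤ 191 / 50 * u ^ 2)
    linarith [mul_pos hu20 hC0, neg_abs_le B]

theorem log_le_linear {T : ℝ} (hT : 0 < T) : log T ≤ 23 / 1250 * T + 3 := by
  have h4 : (2.718 : ℝ) ^ 4 ≤ exp 4 := by
    have := pow_le_pow_left₀ (by norm_num) (by linarith [exp_one_gt_d9] : (2.718 : ℝ) ≤ exp 1) 4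
    rwa [← Real.exp_nat_mul, mul_one] at this
  have h := log_le_sub_one_of_pos (div_pos hT (exp_pos 4))
  rw [log_div hT.ne' (exp_pos 4).ne', log_exp] at h
  have : T / exp 4 ≤ 23 / 1250 * T := by
    rw [div_le_iff₀ (exp_pos 4)]
    norm_num at h4
    nlinarith
  linarith

variable {r : ℝ}

theorem le_log_sub_log_two_pi {C : ℝ} (hr : 0 < r) (hC : 71 / 100 * √π / r ^ 3 ≤ C) :
    -2 - 3 / 2 * log (r ^ 2) ≤ log C - log (2 * π) := by
  have hC0 : 0 < C := lt_of_lt_of_le (by positivity) hC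
  have hq2 : √π ≤ 2 := by
    rw [sqrt_le_left (by norm_num)]
    linarith [pi_le_four]
  have h1 : exp (-2) / r ^ 3 ≤ C / (2 * π) := by
    have he : exp (-2) ≤ 71 / 400 := by
      have h2 : (2.718 : ℝ) ^ 2 ≤ exp 2 := by
        have := pow_le_pow_left₀ (by norm_num)
          (by linarith [exp_one_gt_d9] : (2.718 : ℝ) ≤ exp 1) 2
        rwa [← Real.exp_nat_mul, mul_one] at this
      rw [exp_neg, inv_le_comm₀ (exp_pos 2) (by norm_num)]
      norm_num at h2 ⊢
      linarith
    rw [le_div_iff₀ (by positivity)]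
    refine le_trans ?_ hC
    rw [div_mul_eq_mul_div]
    refine div_le_div_of_nonneg_right ?_ (by positivity)
    have hpq : π = √π * √π := (mul_self_sqrt pi_pos.le).symm
    calc exp (-2) * (2 * π) ≤ 71 / 400 * (2 * π) := by gcongr
      _ = 71 / 200 * (√π * √π) := by rw [← hpq]; ring
      _ ≤ 71 / 200 * (2 * √π) := by gcongr
      _ = 71 / 100 * √π := by ring
  have h2 := log_le_log (by positivity) h1
  rw [log_div (by positivity) (by positivity), log_div hC0.ne' (by positivity), log_exp,
    log_pow] at h2
  have : log (r ^ 2) = 2 * log r := by rw [log_pow]; norm_num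
  rw [this]
  push_cast at h2
  linarith

theorem le_integral_decay_mul_cos_cos (hr : 0 < r) (hT : 50 ≤ r ^ 2) :
    (∫ θ in -π..π, exp (-decay (r ^ 2)⁻¹ θ) * cos (phase (r ^ 2)⁻¹ θ)) -
        501 / 2000 * √π / r ^ 9 ≤
      ∫ θ in -π..π, exp (-decay (r ^ 2)⁻¹ θ) * (cos θ * cos (phase (r ^ 2)⁻¹ θ)) := by
  have hd := continuous_decay (x := (r ^ 2)⁻¹) (by positivity)
  have hp := continuous_phase (x := (r ^ 2)⁻¹) (by positivity)
  have h := integral_decay_mul_sq_le hr hT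
  have i₀ : IntervalIntegrable (fun θ => exp (-decay (r ^ 2)⁻¹ θ) * cos (phase (r ^ 2)⁻¹ θ))
      MeasureTheory.volume (-π) π := (by fun_prop : Continuous _).intervalIntegrable _ _
  have i₁ : IntervalIntegrable
      (fun θ => exp (-decay (r ^ 2)⁻¹ θ) * (cos θ * cos (phase (r ^ 2)⁻¹ θ)))
      MeasureTheory.volume (-π) π := (by fun_prop : Continuous _).intervalIntegrable _ _
  have i₂ : IntervalIntegrable (fun θ => 1 / 2 * (exp (-decay (r ^ 2)⁻¹ θ) * θ ^ 2))
      MeasureTheory.volume (-π) π := (by fun_prop : Continuous _).intervalIntegrable _ _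
  have hm := intervalIntegral.integral_mono_on (by linarith [pi_pos] : -π ≤ π) (i₀.sub i₁) i₂
    fun θ _ => by
      have h1 : (1 - cos θ) * cos (phase (r ^ 2)⁻¹ θ) ≤ θ ^ 2 / 2 :=
        (mul_le_of_le_one_right (by linarith [cos_le_one θ]) (cos_le_one _)).trans
          (by linarith [one_sub_sq_div_two_le_cos (x := θ)])
      have := mul_le_mul_of_nonneg_left h1 (exp_pos (-decay (r ^ 2)⁻¹ θ)).le
      linarith
  rw [intervalIntegral.integral_sub i₀ i₁, intervalIntegral.integral_const_mul] at hm
  rw [mul_div_assoc] at h ⊢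
  linarith

theorem rootLogConvexAt_of_moment_eq {n : ℕ} (hn : 1 ≤ n) (hr : 0 < r) (hT : 50 ≤ r ^ 2)
    (hm : moment 1 (r ^ 2)⁻¹ = n) : RootLogConvexAt n := by
  have hx : 0 < (r ^ 2)⁻¹ := by positivity
  have hd := continuous_decay hx
  have hp := continuous_phase hx
  set C := ∫ θ in -π..π, exp (-decay (r ^ 2)⁻¹ θ) * cos (phase (r ^ 2)⁻¹ θ) with hC
  set A := ∫ θ in -π..π, exp (-decay (r ^ 2)⁻¹ θ) * (cos θ * cos (phase (r ^ 2)⁻¹ θ)) with hA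
  set B := ∫ θ in -π..π, exp (-decay (r ^ 2)⁻¹ θ) * (sin θ * sin (phase (r ^ 2)⁻¹ θ)) with hB
  have hC' : 71 / 100 * √π / r ^ 3 ≤ C := le_integral_decay_mul_cos hr hT
  have hA' : C - 501 / 2000 * √π / r ^ 9 ≤ A := le_integral_decay_mul_cos_cos hr hT
  have hB' : |B| ≤ 1353 / 1000 * √π / r ^ 7 := abs_integral_decay_mul_sin_le hr hT
  have iA : IntervalIntegrable
      (fun θ => exp (-decay (r ^ 2)⁻¹ θ) * (cos θ * cos (phase (r ^ 2)⁻¹ θ)))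
      MeasureTheory.volume (-π) π := (by fun_prop : Continuous _).intervalIntegrable _ _
  have iB : IntervalIntegrable
      (fun θ => exp (-decay (r ^ 2)⁻¹ θ) * (sin θ * sin (phase (r ^ 2)⁻¹ θ)))
      MeasureTheory.volume (-π) π := (by fun_prop : Continuous _).intervalIntegrable _ _
  have l0 : log C = log (2 * π) + log (p n) - n * (r ^ 2)⁻¹ - moment 0 (r ^ 2)⁻¹ := by
    rw [← log_integral_decay_cos hx, hm, hC]
    simp
  have l1 : log (A - B) = log (2 * π) + log (p (n + 1)) - (n + 1) * (r ^ 2)⁻¹ -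
      moment 0 (r ^ 2)⁻¹ := by
    have := log_integral_decay_cos hx (n + 1)
    push_cast at this
    rw [← this, hm, hA, hB, ← intervalIntegral.integral_sub iA iB]
    congr 1
    refine intervalIntegral.integral_congr fun θ _ => ?_
    rw [show ((n : ℝ) - (n + 1)) * θ - phase (r ^ 2)⁻¹ θ = -(θ + phase (r ^ 2)⁻¹ θ) by ring,
      cos_neg, cos_add]
    ring
  have l2 : log (A + B) = log (2 * π) + log (p (n - 1)) - (n - 1) * (r ^ 2)⁻¹ -
      moment 0 (r ^ 2)⁻¹ := by
    have := log_integral_decay_cos hx (n - 1)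
    push_cast [hn] at this
    rw [← this, hm, hA, hB, ← intervalIntegral.integral_add iA iB]
    congr 1
    refine intervalIntegral.integral_congr fun θ _ => ?_
    rw [show ((n : ℝ) - (n - 1)) * θ - phase (r ^ 2)⁻¹ θ = θ - phase (r ^ 2)⁻¹ θ by ring, cos_sub]
    ring
  have hq : 0 < √π := sqrt_pos.mpr pi_pos
  have hC0 : 0 < C := lt_of_lt_of_le (by positivity) hC'
  set T := r ^ 2 with hTr
  have hT0 : 0 < T := by positivity
  have hj : 501 / 2000 * √π / r ^ 9 ≤ 353 / 1000 / T ^ 3 * C := by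
    refine le_trans ?_ (mul_le_mul_of_nonneg_left hC' (by positivity))
    have e : 353 / 1000 / T ^ 3 * (71 / 100 * √π / r ^ 3) =
        353 / 1000 * (71 / 100) * √π / r ^ 9 := by
      rw [hTr]
      field_simp
    rw [e]
    gcongr
    norm_num
  have hb : |B| ≤ 953 / 500 / T ^ 2 * C := by
    refine hB'.trans (le_trans ?_ (mul_le_mul_of_nonneg_left hC' (by positivity)))
    have e : 953 / 500 / T ^ 2 * (71 / 100 * √π / r ^ 3) =
        953 / 500 * (71 / 100) * √π / r ^ 7 := by
      rw [hTr]
      field_simp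
    rw [e]
    gcongr
    norm_num
  obtain ⟨u, hu⟩ : ∃ u, u = 1 / T := ⟨_, rfl⟩
  have hu0 : 0 < u := by rw [hu]; positivity
  have hu1 : u ≤ 1 / 50 := by rw [hu]; exact one_div_le_one_div_of_le (by norm_num) hT
  have hj' : (1 - 353 / 1000 * u ^ 3) * C ≤ A := by
    have : 353 / 1000 / T ^ 3 = 353 / 1000 * u ^ 3 := by rw [hu]; ring
    rw [this] at hj
    linarith
  have hb' : |B| ≤ 953 / 500 * u ^ 2 * C := by
    have : 953 / 500 / T ^ 2 = 953 / 500 * u ^ 2 := by rw [hu]; ring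
    rwa [this] at hb
  obtain ⟨k2, k1⟩ := log_sub_add_bounds hC0 hu0 hu1 hj' hb'
  have hpi : π ^ 2 / 6 ≤ 329 / 200 := by nlinarith [pi_lt_d4, pi_pos]
  have hn2 : (n : ℝ) * u ^ 2 ≤ 329 / 200 := by
    have h := moment_one_le hx
    rw [hm] at h
    have e : 1 / T⁻¹ ^ 2 * (π ^ 2 / 6) * u ^ 2 = π ^ 2 / 6 := by
      rw [hu]
      field_simp
    have := mul_le_mul_of_nonneg_right h (sq_nonneg u)
    rw [e] at this
    linarith
  have hn0 : (0 : ℝ) ≤ n := Nat.cast_nonneg n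
  have hTu : T * u = 1 := by rw [hu]; field_simp
  have b2 : (n : ℝ) ^ 2 * (2 * log C - log (A - B) - log (A + B)) ≤ 53 / 25 * T := by
    refine (mul_le_mul_of_nonneg_left k2 (sq_nonneg _)).trans ?_
    have e : (n : ℝ) ^ 2 * (39 / 50 * u ^ 3) = 39 / 50 * T * (n * u ^ 2) ^ 2 := by
      linear_combination (-39 / 50 * (n : ℝ) ^ 2 * u ^ 3) * hTu
    have : ((n : ℝ) * u ^ 2) ^ 2 ≤ (329 / 200) ^ 2 := pow_le_pow_left₀ (by positivity) hn2 2
    rw [e]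
    nlinarith
  have b1 : (n : ℝ) * (log (A - B) - log (A + B)) ≤ 63 / 10 := by
    have := mul_le_mul_of_nonneg_left k1 hn0
    linarith
  have hS := le_moment_zero hx
  have hlogC := le_log_sub_log_two_pi hr hC'
  have hlogT := log_le_linear hT0
  rw [one_div, inv_inv] at hS
  rw [RootLogConvexAt]
  have e2 : 2 * log (p n) - log (p (n - 1)) - log (p (n + 1)) =
      2 * log C - log (A - B) - log (A + B) := by
    rw [l0, l1, l2]
    ring
  have e1 : log (p (n + 1)) - log (p (n - 1)) = log (A - B) - log (A + B) + 2 * T⁻¹ := by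
    rw [l1, l2]
    ring
  rw [e2, e1]
  have e0 : log (p n) = log C - log (2 * π) + n * T⁻¹ + moment 0 T⁻¹ := by
    rw [l0]
    ring
  rw [e0]
  linarith

theorem rootLogConvexAt_of_lt {n : ℕ} (hn : 4122 < n) : RootLogConvexAt n := by
  obtain ⟨x, hx, hm⟩ := exists_moment_one_eq (n := n) (by lia)
  have hs : √(x⁻¹) ^ 2 = x⁻¹ := sq_sqrt (by positivity)
  refine rootLogConvexAt_of_moment_eq (r := √(x⁻¹)) (by lia) (by positivity) ?_
    (by rw [hs, inv_inv, hm])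
  rw [hs]
  have h := moment_one_le hx
  have hn' : (4123 : ℝ) ≤ n := by exact_mod_cast hn
  have hpi : π ^ 2 / 6 ≤ 329 / 200 := by nlinarith [pi_lt_d4, pi_pos]
  rw [hm, one_div, ← inv_pow] at h
  have hx' : 0 < x⁻¹ := by positivity
  have := mul_le_mul_of_nonneg_left hpi (sq_nonneg x⁻¹)
  nlinarith

end LargeArgument

end PartitionRoot

theorem nth_root_p_log_convex (n : ℕ) (hn : 27 ≤ n) :
    (p n ^ ((1 : ℝ) / (n : ℝ))) ^ 2 ≤
      p (n - 1) ^ ((1 : ℝ) / ((n : ℝ) - 1)) * p (n + 1) ^ ((1 : ℝ) / ((n : ℝ) + 1)) := by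
  rcases le_or_gt n 4122 with h | h
  · exact (PartitionRoot.rootLogConvexAt_of_le hn h).rpow_le (by lia)
  · exact (PartitionRoot.rootLogConvexAt_of_lt h).rpow_le (by lia)
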